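/- arXiv:1709.05322 — 5 statements merged into one kernel-verified Lean document; each statement's English description precedes it below -/
import Mathlib

section
/- Let X be a Banach space, let T be a weakly almost periodic linear operator on X, and let (a_k)_{k≥1} be a sequence of scalars (real if X is a real Banach space) such that sup_n (1/n)∑_{k=1}^n |a_k| φ(|a_k|) < ∞ for some strictly increasing function φ: ℝ⁺ → ℝ⁺ with φ(x) → ∞. Then for every flight vector x of T, lim_n ‖(1/n)∑_{k=1}^n a_k T^k x‖ = 0. -/
open Filter Finset

open scoped CompactlySupported in
lemma aux_convex {K : Type*} [TopologicalSpace K] [CompactSpace K] [T2Space K]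
    (f : ℕ → C(K, ℝ)) (B : ℝ) (hf0 : ∀ j y, 0 ≤ f j y) (hfB : ∀ j y, f j y ≤ B)
    (hlim : ∀ y, Tendsto (fun j => f j y) atTop (nhds 0)) (ε : ℝ) (hε : 0 < ε) :
    ∃ (s : Finset ℕ) (w : ℕ → ℝ), (∀ i ∈ s, 0 ≤ w i) ∧ ∑ i ∈ s, w i = 1 ∧
      ∀ y, ∑ i ∈ s, w i * f i y < ε := by
  letI : MeasurableSpace K := borel K
  haveI : BorelSpace K := ⟨rfl⟩
  by_contra hcon
  push Not at hcon
  let D : Set C(K, ℝ) := {g | ∀ y, g y < ε}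
  have hDo : IsOpen D := by
    have := ContinuousMap.isOpen_setOfPred_mapsTo (X := K) (Y := ℝ) isCompact_univ (isOpen_Iio (a := ε))
    simpa [Set.MapsTo, D] using this
  have hDc : Convex ℝ D := by
    intro g hg h hh a b ha hb hab y
    have h1 := hg y
    have h2 := hh y
    simp only [ContinuousMap.add_apply, ContinuousMap.smul_apply, smul_eq_mul]
    have : a * (ε - g y) + b * (ε - h y) > 0 := by
      rcases ha.eq_or_lt with h | h
      · subst h
        have : b = 1 := by linarith
        subst this; linarith
      · have := mul_pos h (sub_pos.2 h1)
        have := mul_nonneg hb (sub_pos.2 h2).le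
        linarith
    have h3 : (a + b) * ε = ε := by rw [hab, one_mul]
    linarith
  have hdisj : Disjoint D (convexHull ℝ (Set.range f)) := by
    rw [Set.disjoint_left]
    intro g hgD hg
    rw [convexHull_range_eq_exists_affineCombination] at hg
    obtain ⟨s, w, hw0, hw1, rfl⟩ := hg
    rw [Finset.affineCombination_eq_linear_combination _ _ _ hw1] at hgD
    obtain ⟨y, hy⟩ := hcon s w hw0 hw1
    have := hgD y
    simp at this
    linarith
  obtain ⟨L, u, hL1, hL2⟩ := geometric_hahn_banach_open hDc hDo (convex_convexHull ℝ _) hdisj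
  have hu : 0 < u := by
    have := hL1 0 (fun y => by simpa using hε)
    simpa using this
  have hpos : ∀ g : C(K, ℝ), (∀ y, 0 ≤ g y) → 0 ≤ L g := by
    intro g hg
    by_contra hneg
    push Not at hneg
    have := hL1 ((u / L g) • g) (fun y => by
      have h1 : u / L g * g y ≤ 0 :=
        mul_nonpos_of_nonpos_of_nonneg (div_nonpos_of_nonneg_of_nonpos hu.le hneg.le) (hg y)
      simp only [ContinuousMap.smul_apply, smul_eq_mul]
      linarith)
    simp only [map_smul, smul_eq_mul] at this
    rw [div_mul_cancel₀ _ hneg.ne] at this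
    exact lt_irrefl _ this
  let Λ : C_c(K, ℝ) →ₚ[ℝ] ℝ := PositiveLinearMap.mk₀
    { toFun := fun g => L (g : C(K, ℝ))
      map_add' := fun g h => by
        rw [← map_add]; rfl
      map_smul' := fun c g => by
        rw [RingHom.id_apply, ← map_smul]; rfl }
    (fun g hg => hpos _ (fun y => hg y))
  let F : ℕ → C_c(K, ℝ) := fun j => CompactlySupportedContinuousMap.continuousMapEquiv (f j)
  have hΛ : ∀ j, ∫ y, f j y ∂(RealRMK.rieszMeasure Λ) = L (f j) := fun j =>
    RealRMK.integral_rieszMeasure Λ (F j)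
  have hlimI : Tendsto (fun j => ∫ y, f j y ∂(RealRMK.rieszMeasure Λ)) atTop (nhds 0) := by
    have := MeasureTheory.tendsto_integral_of_dominated_convergence
      (μ := RealRMK.rieszMeasure Λ) (F := fun j y => f j y) (f := fun _ => (0 : ℝ))
      (fun _ => B) (fun j => (f j).continuous.measurable.aestronglyMeasurable)
      (MeasureTheory.integrable_const B)
      (fun j => Eventually.of_forall fun y => by
        rw [Real.norm_of_nonneg (hf0 j y)]; exact hfB j y)
      (Eventually.of_forall hlim)
    simpa using this
  have : u ≤ 0 := ge_of_tendsto' hlimI (fun j => by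
    rw [hΛ]; exact hL2 _ (subset_convexHull ℝ _ ⟨j, rfl⟩))
  linarith

lemma aux_wk {𝕜 : Type*} [RCLike 𝕜] {X : Type*} [NormedAddCommGroup X] [NormedSpace 𝕜 X]
    (z : ℕ → X) (B : ℝ) (hB : ∀ j, ‖z j‖ ≤ B)
    (hz : ∀ f : X →L[𝕜] 𝕜, Tendsto (fun j : ℕ => f (z j)) atTop (nhds 0))
    (ε : ℝ) (hε : 0 < ε) :
    ∃ (s : Finset ℕ) (w : ℕ → ℝ), (∀ i ∈ s, 0 ≤ w i) ∧ ∑ i ∈ s, w i = 1 ∧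
      ∀ f : X →L[𝕜] 𝕜, ‖f‖ ≤ 1 → ∑ i ∈ s, w i * ‖f (z i)‖ < ε := by
  let K : Set (WeakDual 𝕜 X) := WeakDual.toStrongDual ⁻¹' Metric.closedBall 0 1
  have hK : IsCompact K := WeakDual.isCompact_closedBall 0 1
  haveI : CompactSpace K := isCompact_iff_compactSpace.1 hK
  have hmem : ∀ y : K, ‖WeakDual.toStrongDual y.1‖ ≤ 1 := fun y =>
    mem_closedBall_zero_iff.1 y.2
  obtain ⟨s, w, h0, h1, h2⟩ := aux_convex (K := K)
    (fun j => ⟨fun y => ‖y.1 (z j)‖,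
      ((WeakDual.eval_continuous (z j)).comp continuous_subtype_val).norm⟩) B
    (fun j y => norm_nonneg (y.1 (z j)))
    (fun j y => by
      have := (WeakDual.toStrongDual y.1).le_of_opNorm_le (hmem y) (z j)
      rw [one_mul] at this
      exact this.trans (hB j))
    (fun y => by simpa using (hz (WeakDual.toStrongDual y.1)).norm) ε hε
  refine ⟨s, w, h0, h1, fun f hf => ?_⟩
  exact h2 ⟨StrongDual.toWeakDual f, by simpa [K] using hf⟩

lemma aux_bdd {𝕜 : Type*} [RCLike 𝕜] {X : Type*} [NormedAddCommGroup X] [NormedSpace 𝕜 X]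
    [CompleteSpace X] (T : X →L[𝕜] X)
    (hWAP : ∀ x : X,
      IsCompact (closure (Set.range fun n : ℕ => toWeakSpace 𝕜 X ((T ^ n) x)))) :
    ∃ M : ℝ, 0 < M ∧ ∀ n : ℕ, ‖T ^ n‖ ≤ M := by
  have h1 : ∀ x : X, ∃ C, ∀ n : ℕ, ‖(T ^ n) x‖ ≤ C := by
    intro x
    obtain ⟨C, hC⟩ := banach_steinhaus
      (g := fun n : ℕ => NormedSpace.inclusionInDoubleDual 𝕜 X ((T ^ n) x)) (by
        intro f
        have hc : Continuous (fun y : WeakSpace 𝕜 X => f ((toWeakSpace 𝕜 X).symm y)) :=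
          WeakBilin.eval_continuous _ f
        obtain ⟨C, hC⟩ := (((hWAP x).image hc).isBounded).exists_norm_le
        exact ⟨C, fun n => by
          simpa using hC _ ⟨_, subset_closure ⟨n, rfl⟩, rfl⟩⟩)
    refine ⟨C, fun n => ?_⟩
    have := hC n
    rwa [show ‖NormedSpace.inclusionInDoubleDual 𝕜 X ((T ^ n) x)‖ = ‖(T ^ n) x‖ from
      (NormedSpace.inclusionInDoubleDualLi 𝕜).norm_map _] at this
  obtain ⟨C, hC⟩ := banach_steinhaus h1
  exact ⟨max C 1, by positivity, fun n => (hC n).trans (le_max_left _ _)⟩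

lemma aux_shift (n : ℕ) (g : ℕ → ℝ) :
    ∑ k ∈ Icc 1 n, g k + g (n + 1) = g 1 + ∑ k ∈ Icc 1 n, g (k + 1) := by
  induction n with
  | zero => simp
  | succ n ih =>
    rw [Finset.sum_Icc_succ_top (by omega), Finset.sum_Icc_succ_top (by omega)]
    linarith

lemma aux_mean {𝕜 : Type*} [RCLike 𝕜] {X : Type*} [NormedAddCommGroup X] [NormedSpace 𝕜 X]
    (T : X →L[𝕜] X) (M : ℝ) (hM : 0 < M) (hT : ∀ n : ℕ, ‖T ^ n‖ ≤ M) (x : X)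
    (hx_flight : ∃ n : ℕ → ℕ, StrictMono n ∧
      ∀ f : X →L[𝕜] 𝕜, Tendsto (fun j : ℕ => f ((T ^ n j) x)) atTop (nhds 0))
    (ε : ℝ) (hε : 0 < ε) :
    ∃ N : ℝ, ∀ (n : ℕ) (f : X →L[𝕜] 𝕜), ‖f‖ ≤ 1 →
      ∑ k ∈ Icc 1 n, ‖f ((T ^ k) x)‖ ≤ n * ε + N := by
  obtain ⟨m, -, hm⟩ := hx_flight
  have hTx : ∀ k, ‖(T ^ k) x‖ ≤ M * ‖x‖ := fun k => (T ^ k).le_of_opNorm_le (hT k) x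
  obtain ⟨s, w, h0, h1, h2⟩ := aux_wk (fun j => (T ^ m j) x) (M * ‖x‖) (fun j => hTx _) hm
    (ε / M) (by positivity)
  refine ⟨∑ i ∈ s, w i * (m i * (M * ‖x‖)), fun n f hf => ?_⟩
  have hfx : ∀ k, ‖f ((T ^ k) x)‖ ≤ M * ‖x‖ := fun k => by
    have := f.le_of_opNorm_le hf ((T ^ k) x)
    linarith [hTx k]
  have hshift : ∀ p : ℕ, ∑ k ∈ Icc 1 n, ‖f ((T ^ k) x)‖ ≤
      ∑ k ∈ Icc 1 n, ‖f ((T ^ (k + p)) x)‖ + p * (M * ‖x‖) := by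
    intro p
    induction p with
    | zero => simp
    | succ p ih =>
      refine ih.trans ?_
      have e : ∀ g : ℕ → ℝ, ∑ k ∈ Icc 1 n, g k + g (n+1) = g 1 + ∑ k ∈ Icc 1 n, g (k+1) := by
        exact aux_shift n
      have := e (fun k => ‖f ((T ^ (k + p)) x)‖)
      simp only [add_assoc, add_comm 1 p] at this ⊢
      have h3 := hfx (p + 1)
      have h4 := norm_nonneg (f ((T ^ (n + (p + 1))) x))
      rw [Nat.cast_add, Nat.cast_one]
      linarith
  have hk : ∀ k, ∑ i ∈ s, w i * ‖f ((T ^ (k + m i)) x)‖ ≤ ε := by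
    intro k
    have hg : ‖((M⁻¹ : ℝ) : 𝕜) • (f.comp (T ^ k))‖ ≤ 1 := by
      rw [norm_smul, RCLike.norm_ofReal, abs_of_pos (by positivity)]
      have : ‖f.comp (T ^ k)‖ ≤ 1 * M :=
        (f.opNorm_comp_le _).trans (mul_le_mul hf (hT k) (norm_nonneg _) zero_le_one)
      rw [inv_mul_le_iff₀ hM]; linarith
    have h3 := h2 _ hg
    have h4 : ∑ i ∈ s, w i * ‖(((M⁻¹ : ℝ) : 𝕜) • (f.comp (T ^ k))) ((T ^ m i) x)‖
        = M⁻¹ * ∑ i ∈ s, w i * ‖f ((T ^ (k + m i)) x)‖ := by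
      rw [Finset.mul_sum]
      refine Finset.sum_congr rfl fun i _ => ?_
      rw [ContinuousLinearMap.smul_apply, norm_smul, RCLike.norm_ofReal,
        abs_of_pos (inv_pos.2 hM), pow_add]
      simp only [ContinuousLinearMap.comp_apply, ContinuousLinearMap.mul_apply]
      ring
    rw [h4, inv_mul_lt_iff₀ hM, mul_div_cancel₀ _ hM.ne'] at h3
    exact h3.le
  calc ∑ k ∈ Icc 1 n, ‖f ((T ^ k) x)‖
      = ∑ i ∈ s, w i * ∑ k ∈ Icc 1 n, ‖f ((T ^ k) x)‖ := by rw [← Finset.sum_mul, h1, one_mul]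
    _ ≤ ∑ i ∈ s, w i * (∑ k ∈ Icc 1 n, ‖f ((T ^ (k + m i)) x)‖ + m i * (M * ‖x‖)) :=
        Finset.sum_le_sum fun i hi => mul_le_mul_of_nonneg_left (hshift _) (h0 i hi)
    _ = ∑ k ∈ Icc 1 n, ∑ i ∈ s, w i * ‖f ((T ^ (k + m i)) x)‖
          + ∑ i ∈ s, w i * (m i * (M * ‖x‖)) := by
        rw [Finset.sum_comm]
        simp only [mul_add, Finset.sum_add_distrib, Finset.mul_sum]
    _ ≤ _ := by
        have := Finset.sum_le_sum (s := Icc 1 n) fun k _ => hk k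
        simp at this
        simpa using this

/-- Let `T` be a weakly almost periodic operator on a Banach space `X` (i.e.
every orbit `{T^n x}` is relatively compact in the weak topology), and let `(a_k)` be a sequence
of scalars satisfying `sup_n (1/n) ∑_{k=1}^n |a_k| φ(|a_k|) < ∞` for some strictly increasing
`φ : ℝ⁺ → ℝ⁺` with `φ(x) → ∞`. Then for every flight vector `x` of `T` (i.e. `T^{n_j} x → 0`
weakly along some strictly increasing sequence `(n_j)`),
`lim_n ‖(1/n) ∑_{k=1}^n a_k T^k x‖ = 0`. -/
theorem stmt1 {𝕜 : Type*} [RCLike 𝕜] {X : Type*} [NormedAddCommGroup X] [NormedSpace 𝕜 X]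
    [CompleteSpace X] (T : X →L[𝕜] X)
    (hWAP : ∀ x : X,
      IsCompact (closure (Set.range fun n : ℕ => toWeakSpace 𝕜 X ((T ^ n) x))))
    (a : ℕ → 𝕜) (φ : ℝ → ℝ) (hφ_pos : ∀ t, 0 ≤ t → 0 ≤ φ t)
    (hφ_mono : StrictMonoOn φ (Set.Ici (0 : ℝ)))
    (hφ_top : Tendsto φ atTop atTop)
    (ha : ∃ s : ℝ, ∀ n : ℕ, (n : ℝ)⁻¹ * ∑ k ∈ Icc 1 n, ‖a k‖ * φ ‖a k‖ ≤ s)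
    (x : X)
    (hx_flight : ∃ n : ℕ → ℕ, StrictMono n ∧
      ∀ f : X →L[𝕜] 𝕜, Tendsto (fun j : ℕ => f ((T ^ n j) x)) atTop (nhds 0)) :
    Tendsto (fun n : ℕ => ‖(n : 𝕜)⁻¹ • ∑ k ∈ Icc 1 n, a k • (T ^ k) x‖) atTop (nhds 0) := by
  obtain ⟨M, hM, hT⟩ := aux_bdd T hWAP
  obtain ⟨s, hs⟩ := ha
  have hs0 : 0 ≤ s := by simpa using hs 0
  have hTx : ∀ k, ‖(T ^ k) x‖ ≤ M * ‖x‖ := fun k => (T ^ k).le_of_opNorm_le (hT k) x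
  rw [Metric.tendsto_atTop]
  intro ε hε
  set Q : ℝ := M * ‖x‖ * s with hQ
  have hQ0 : 0 ≤ Q := by positivity
  set L : ℝ := 3 * (Q + 1) / ε with hLdef
  have hL : 0 < L := by positivity
  obtain ⟨R₀, hR₀⟩ := (tendsto_atTop.1 hφ_top L).exists_forall_of_atTop
  set R : ℝ := max R₀ 1 with hRdef
  have hR : 0 < R := by positivity
  obtain ⟨N, hN⟩ := aux_mean T M hM hT x hx_flight (ε / (3 * R)) (by positivity)
  obtain ⟨n₀, hn₀⟩ := exists_nat_gt (3 * (R * N) / ε)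
  refine ⟨max n₀ 1, fun n hn => ?_⟩
  have hn1 : 1 ≤ n := (le_max_right _ _).trans hn
  have hn2 : n₀ ≤ n := (le_max_left _ _).trans hn
  have hnpos : (0 : ℝ) < n := by exact_mod_cast hn1
  rw [dist_zero_right, norm_norm, norm_smul, norm_inv, RCLike.norm_natCast,
    inv_mul_lt_iff₀ hnpos]
  obtain ⟨f, hf, hfe⟩ := exists_dual_vector'' 𝕜 (∑ k ∈ Icc 1 n, a k • (T ^ k) x)
  have hfx : ∀ k, ‖f ((T ^ k) x)‖ ≤ M * ‖x‖ := fun k => by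
    have := f.le_of_opNorm_le hf ((T ^ k) x)
    linarith [hTx k]
  have hnorm : ‖∑ k ∈ Icc 1 n, a k • (T ^ k) x‖ ≤ ∑ k ∈ Icc 1 n, ‖a k‖ * ‖f ((T ^ k) x)‖ := by
    have h1 : ‖∑ k ∈ Icc 1 n, a k • (T ^ k) x‖ = ‖f (∑ k ∈ Icc 1 n, a k • (T ^ k) x)‖ := by
      rw [hfe, RCLike.norm_ofReal, abs_norm]
    rw [h1, map_sum]
    refine (norm_sum_le _ _).trans (le_of_eq (Finset.sum_congr rfl fun k _ => ?_))
    rw [map_smul, norm_smul]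
  have hterm : ∀ k, ‖a k‖ * ‖f ((T ^ k) x)‖ ≤
      R * ‖f ((T ^ k) x)‖ + L⁻¹ * (M * ‖x‖) * (‖a k‖ * φ ‖a k‖) := by
    intro k
    have hp := hφ_pos _ (norm_nonneg (a k))
    rcases le_total ‖a k‖ R with h | h
    · have h1 := mul_le_mul_of_nonneg_right h (norm_nonneg (f ((T ^ k) x)))
      have h2 : 0 ≤ L⁻¹ * (M * ‖x‖) * (‖a k‖ * φ ‖a k‖) := by positivity
      linarith
    · have hφL : L ≤ φ ‖a k‖ := hR₀ _ ((le_max_left _ _).trans h)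
      have h1 : ‖a k‖ * ‖f ((T ^ k) x)‖ ≤ ‖a k‖ * (M * ‖x‖) :=
        mul_le_mul_of_nonneg_left (hfx k) (norm_nonneg _)
      have h2 : 1 ≤ L⁻¹ * φ ‖a k‖ := by
        rw [le_inv_mul_iff₀ hL]; linarith
      have h3 : ‖a k‖ * (M * ‖x‖) * 1 ≤ ‖a k‖ * (M * ‖x‖) * (L⁻¹ * φ ‖a k‖) :=
        mul_le_mul_of_nonneg_left h2 (by positivity)
      have h4 : 0 ≤ R * ‖f ((T ^ k) x)‖ := by positivity
      linarith
  have hsum := hnorm.trans (Finset.sum_le_sum fun k _ => hterm k)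
  rw [Finset.sum_add_distrib, ← Finset.mul_sum, ← Finset.mul_sum] at hsum
  have hA := mul_le_mul_of_nonneg_left (hN n f hf) hR.le
  have hs' := hs n
  rw [inv_mul_le_iff₀ hnpos] at hs'
  have hB := mul_le_mul_of_nonneg_left hs' (show 0 ≤ L⁻¹ * (M * ‖x‖) by positivity)
  have e1 : R * (n * (ε / (3 * R)) + N) = n * ε / 3 + R * N := by field_simp
  have e2 : R * N < n * ε / 3 := by
    have : 3 * (R * N) / ε < n := hn₀.trans_le (by exact_mod_cast hn2)
    rw [div_lt_iff₀ hε] at this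
    linarith
  have e3 : L⁻¹ * (M * ‖x‖) * (n * s) ≤ n * ε / 3 := by
    have : L⁻¹ * (M * ‖x‖) * (n * s) = n * ε / 3 * (Q / (Q + 1)) := by
      rw [hLdef, hQ]; field_simp
    rw [this]
    exact mul_le_of_le_one_right (by positivity) ((div_le_one (by positivity)).2 (by linarith))
  linarith
end

section
/- Let (a_k)_{k≥1} be a Hartman sequence satisfying sup_n (1/n)∑_{k=1}^n |a_k| φ(|a_k|) < ∞ for some strictly increasing function φ: ℝ⁺ → ℝ⁺ with φ(x) → ∞. Then for every weakly almost periodic linear operator T on a complex Banach space X and every x ∈ X, the sequence (1/n)∑_{k=1}^n a_k T^k x converges in norm. -/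
namespace WAPH
open Filter Topology MeasureTheory

lemma exists_eigen {H : Type*} [NormedAddCommGroup H] [InnerProductSpace ℂ H] [CompleteSpace H]
    (U : H →ₗᵢ[ℂ] H) (hU : ∀ h : H, TotallyBounded (Set.range fun k : ℕ => (U^[k]) h))
    (h0 : H) (hne : h0 ≠ 0) : ∃ (l : ℂ) (g : H), ‖l‖ = 1 ∧ g ≠ 0 ∧ U g = l • g := by
  set u : ℕ → H := fun k => (U^[k]) h0 with hu
  have husucc : ∀ k, u (k+1) = U (u k) := fun k => Function.iterate_succ_apply' _ _ _
  have hunorm : ∀ k, ‖u k‖ = ‖h0‖ := by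
    intro k
    induction k with
    | zero => rfl
    | succ k ih => rw [husucc, U.norm_map, ih]
  have hu0 : u 0 = h0 := rfl
  clear_value u
  have htb := hU h0
  rw [← hu] at htb
  set R : ℕ → (H →L[ℂ] H) := fun k => InnerProductSpace.rankOne ℂ (u k) (u k) with hR
  have hRtb : TotallyBounded (Set.range R) := by
    have hc : IsCompact (closure (Set.range u)) :=
      htb.closure.isCompact_of_isClosed isClosed_closure
    have hcont : Continuous (fun v : H => InnerProductSpace.rankOne ℂ v v) :=
      ((ContinuousLinearMap.smulRightL ℂ H H).continuous.comp (innerSL ℂ).continuous).clm_apply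
        continuous_id
    refine (hc.image hcont).totallyBounded.subset ?_
    rintro _ ⟨k, rfl⟩
    exact ⟨u k, subset_closure ⟨k, rfl⟩, rfl⟩
  set S : ℕ → (H →L[ℂ] H) := fun n => (n : ℝ)⁻¹ • ∑ k ∈ Finset.range n, R k with hS
  have hSapp : ∀ n x, S n x = (n : ℝ)⁻¹ • ∑ k ∈ Finset.range n, (inner ℂ (u k) x) • u k := by
    intro n x
    simp [hS, hR]
  have hSmem : ∀ n, 1 ≤ n → S n ∈ convexHull ℝ (Set.range R) := by
    intro n hn
    simp only [hS, Finset.smul_sum]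
    refine (convex_convexHull ℝ _).sum_mem (fun i _ => by positivity) ?_
      (fun i _ => subset_convexHull ℝ _ ⟨i, rfl⟩)
    simp
    field_simp
  have hcomp : IsCompact (closure (convexHull ℝ (Set.range R))) :=
    hRtb.convexHull.closure.isCompact_of_isClosed isClosed_closure
  set W : Ultrafilter ℕ := Filter.hyperfilter ℕ
  have hW : (W : Filter ℕ) ≤ atTop := Nat.hyperfilter_le_atTop
  obtain ⟨Q, -, hQ⟩ := hcomp.ultrafilter_le_nhds (W.map S) (by
    rw [le_principal_iff]
    have : ∀ᶠ n in (W : Filter ℕ), 1 ≤ n := hW (eventually_ge_atTop 1)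
    exact (this.mono fun n hn => subset_closure (hSmem n hn) :
      ∀ᶠ n in (W : Filter ℕ), S n ∈ closure (convexHull ℝ (Set.range R))))
  have hQ : Tendsto S W (𝓝 Q) := hQ
  have hQx : ∀ x, Tendsto (fun n => S n x) W (𝓝 (Q x)) := fun x =>
    ((ContinuousLinearMap.apply ℂ H x).continuous.tendsto Q).comp hQ
  have hQc : IsCompactOperator Q := by
    refine isCompactOperator_of_tendsto hQ (Eventually.of_forall fun n => ?_)
    have hsub : ∀ k, IsCompactOperator (R k) := by
      intro k
      have := (isCompactOperator_of_locallyCompactSpace_rng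
        (ContinuousLinearMap.toSpanSingleton ℂ (u k))).comp_clm (innerSL ℂ (u k))
      exact this
    have hsum : ∀ n, IsCompactOperator ((∑ k ∈ Finset.range n, R k : H →L[ℂ] H)) := by
      intro n
      induction n with
      | zero => simpa using isCompactOperator_zero
      | succ n ih =>
        rw [Finset.sum_range_succ]
        exact ih.add (hsub n)
    exact (hsum n).smul _
  have hQs : (Q : H →ₗ[ℂ] H).IsSymmetric := by
    intro x y
    have h1 : Tendsto (fun n => inner ℂ (S n x) y) W (𝓝 (inner ℂ (Q x) y)) :=
      (hQx x).inner tendsto_const_nhds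
    have h2 : Tendsto (fun n => inner ℂ x (S n y)) W (𝓝 (inner ℂ x (Q y))) :=
      tendsto_const_nhds.inner (hQx y)
    refine tendsto_nhds_unique h1 (h2.congr fun n => ?_)
    rw [hSapp, hSapp, inner_smul_left_eq_smul, inner_smul_right_eq_smul, sum_inner, inner_sum]
    congr 1
    refine Finset.sum_congr rfl fun k _ => ?_
    rw [inner_smul_left, inner_smul_right, inner_conj_symm, mul_comm]
  have hcomm : ∀ x, U (Q x) = Q (U x) := by
    intro x
    have h1 : Tendsto (fun n => U (S n x) - S n (U x)) W (𝓝 (U (Q x) - Q (U x))) :=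
      ((U.continuous.tendsto _).comp (hQx x)).sub (hQx _)
    have h2 : Tendsto (fun n => U (S n x) - S n (U x)) W (𝓝 0) := by
      refine Tendsto.mono_left ?_ hW
      have heq : ∀ n, U (S n x) - S n (U x) =
          (n : ℝ)⁻¹ • ((inner ℂ (u n) (U x)) • u n - (inner ℂ (u 0) (U x)) • u 0) := by
        intro n
        rw [hSapp, hSapp, ← Finset.sum_range_sub (fun k => (inner ℂ (u k) (U x)) • u k),
          Finset.sum_sub_distrib, smul_sub]
        congr 1
        have : U ((n : ℝ)⁻¹ • ∑ k ∈ Finset.range n, (inner ℂ (u k) x) • u k)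
          = (n : ℝ)⁻¹ • U (∑ k ∈ Finset.range n, (inner ℂ (u k) x) • u k) := by
          exact (U.toContinuousLinearMap.restrictScalars ℝ).map_smul _ _
        rw [this, map_sum]
        congr 1
        refine Finset.sum_congr rfl fun k _ => ?_
        rw [map_smul, husucc, U.inner_map_map]
      have hb : ∀ n, ‖U (S n x) - S n (U x)‖ ≤ (n : ℝ)⁻¹ * (2 * (‖h0‖ * ‖x‖ * ‖h0‖)) := by
        intro n
        rw [heq, norm_smul, norm_inv, Real.norm_natCast]
        gcongr
        refine (norm_sub_le _ _).trans ?_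
        have : ∀ k, ‖(inner ℂ (u k) (U x)) • u k‖ ≤ ‖h0‖ * ‖x‖ * ‖h0‖ := by
          intro k
          rw [norm_smul, hunorm]
          gcongr
          refine (norm_inner_le_norm _ _).trans ?_
          rw [hunorm, U.norm_map]
        linarith [this n, this 0]
      refine squeeze_zero_norm hb ?_
      simpa using (tendsto_inv_atTop_nhds_zero_nat (𝕜 := ℝ)).mul_const (2 * (‖h0‖ * ‖x‖ * ‖h0‖))
    exact sub_eq_zero.1 (tendsto_nhds_unique h1 h2)
  have hQne : Q ≠ 0 := by
    intro hQ0
    have hpos : 0 < ‖h0‖ := norm_pos_iff.2 hne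
    obtain ⟨t, ht, htc⟩ := Metric.totallyBounded_iff.1 htb (‖h0‖/2) (by positivity)
    lift t to Finset H using ht
    have h1 : Tendsto (fun n => ∑ w ∈ t, (inner ℂ w (S n w)).re) W (𝓝 0) := by
      have : Tendsto (fun n => ∑ w ∈ t, (inner ℂ w (S n w)).re) W
          (𝓝 (∑ w ∈ t, (inner ℂ w (Q w)).re)) := by
        refine tendsto_finsetSum _ fun w _ => ?_
        exact (Complex.continuous_re.tendsto _).comp (tendsto_const_nhds.inner (hQx w))
      simpa [hQ0] using this
    have h2 : ∀ᶠ n in (W : Filter ℕ), (‖h0‖^2/2)^2 ≤ ∑ w ∈ t, (inner ℂ w (S n w)).re := by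
      have : ∀ᶠ n in (W : Filter ℕ), 1 ≤ n := hW (eventually_ge_atTop 1)
      filter_upwards [this] with n hn
      have e1 : ∀ w, (inner ℂ w (S n w)).re = (n:ℝ)⁻¹ * ∑ k ∈ Finset.range n, ‖inner ℂ (u k) w‖^2 := by
        intro w
        rw [hSapp, inner_smul_right_eq_smul, Complex.smul_re, inner_sum, Complex.re_sum, smul_eq_mul]
        congr 1
        refine Finset.sum_congr rfl fun k _ => ?_
        rw [inner_smul_right, ← inner_conj_symm w (u k), Complex.mul_conj, Complex.normSq_eq_norm_sq]
        exact Complex.ofReal_re _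
      simp only [e1]
      rw [← Finset.mul_sum, Finset.sum_comm]
      have e2 : ∀ k ∈ Finset.range n, (‖h0‖^2/2)^2 ≤ ∑ w ∈ t, ‖inner ℂ (u k) w‖^2 := by
        intro k _
        have hk := htc ⟨k, rfl⟩
        simp only [Set.mem_iUnion, Finset.mem_coe, Metric.mem_ball, exists_prop] at hk
        obtain ⟨w, hw, hd⟩ := hk
        refine le_trans ?_ (Finset.single_le_sum (f := fun w => ‖inner ℂ (u k) w‖^2)
          (fun _ _ => by positivity) hw)
        have e3 : ‖h0‖^2 / 2 ≤ ‖inner ℂ (u k) w‖ := by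
          have : inner ℂ (u k) w = inner ℂ (u k) (u k) - inner ℂ (u k) (u k - w) := by
            rw [inner_sub_right]; ring
          rw [this]
          have a1 := norm_sub_norm_le (inner ℂ (u k) (u k)) (inner ℂ (u k) (u k - w))
          have a2 : ‖inner ℂ (u k) (u k)‖ = ‖h0‖^2 := by
            rw [inner_self_eq_norm_sq_to_K, hunorm]; simp
          have a3 : ‖inner ℂ (u k) (u k - w)‖ ≤ ‖h0‖ * (‖h0‖/2) := by
            refine (norm_inner_le_norm _ _).trans ?_
            rw [hunorm]
            gcongr
            rw [← dist_eq_norm]; exact hd.le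
          nlinarith
        gcongr
      have e4 := Finset.sum_le_sum e2
      simp only [Finset.sum_const, Finset.card_range, nsmul_eq_mul] at e4
      have hn' : (0:ℝ) < n := by exact_mod_cast hn
      rw [inv_mul_eq_div, le_div_iff₀ hn']
      linarith
    have h3 := ge_of_tendsto h1 h2
    have : 0 < (‖h0‖^2/2)^2 := by positivity
    linarith
  have hev : ∃ m : ℂ, Module.End.HasEigenvalue (Q : Module.End ℂ H) m ∧ m ≠ 0 := by
    by_contra hcon
    push Not at hcon
    exact hQne ((ContinuousLinearMap.eq_zero_of_forall_hasEigenvalue_eq_zero hQc hQs).1 hcon)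
  obtain ⟨m, hm, hm0⟩ := hev
  have := ContinuousLinearMap.finite_dimensional_eigenspace hQc m hm0
  set V := Module.End.eigenspace (Q : Module.End ℂ H) m
  have hinv : ∀ v ∈ V, U v ∈ V := by
    intro v hv
    rw [Module.End.mem_eigenspace_iff] at hv ⊢
    have hv' : Q v = m • v := hv
    change Q (U v) = m • U v
    rw [← hcomm, hv', map_smul]
  have : Nontrivial V := by
    obtain ⟨v, hv⟩ := hm.exists_hasEigenvector
    exact ⟨⟨⟨v, hv.1⟩, 0, fun h => hv.2 (congrArg Subtype.val h)⟩⟩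
  obtain ⟨l, hl⟩ := Module.End.exists_eigenvalue (U.toLinearMap.restrict hinv)
  obtain ⟨v, hv⟩ := hl.exists_hasEigenvector
  have hv1 : U v = l • (v : H) := congrArg Subtype.val hv.apply_eq_smul
  have hv0 : (v : H) ≠ 0 := fun h => hv.2 (Subtype.ext h)
  refine ⟨l, v, ?_, hv0, hv1⟩
  have := congrArg norm hv1
  rw [U.norm_map, norm_smul] at this
  have h0 : ‖(v:H)‖ ≠ 0 := norm_ne_zero_iff.2 hv0
  field_simp at this
  exact this.symm

end WAPH


namespace WAPH
open Filter Topology MeasureTheory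

lemma exists_ultralim {E : Type*} [NormedAddCommGroup E] [ProperSpace E] (U : Ultrafilter ℕ) (s : ℕ → E) (M : ℝ)
    (hs : ∀ n, ‖s n‖ ≤ M) : ∃ c, Tendsto s U (𝓝 c) := by
  obtain ⟨c, -, hc⟩ := (isCompact_closedBall (0 : E) M).ultrafilter_le_nhds (U.map s) (by
    rw [le_principal_iff]
    exact (Eventually.of_forall fun n => by simpa using hs n :
      ∀ᶠ n in (U : Filter ℕ), s n ∈ Metric.closedBall (0 : E) M))
  exact ⟨c, hc⟩

lemma avg_norm_le {E : Type*} [NormedAddCommGroup E] [NormedSpace ℝ E] (s : ℕ → E) (M : ℝ)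
    (hs : ∀ n, ‖s n‖ ≤ M) (n : ℕ) : ‖(n : ℝ)⁻¹ • ∑ k ∈ Finset.range n, s k‖ ≤ M := by
  have hM : 0 ≤ M := (norm_nonneg _).trans (hs 0)
  rcases Nat.eq_zero_or_pos n with rfl | hn
  · simpa using hM
  · rw [norm_smul, norm_inv, Real.norm_natCast]
    have hn' : (0:ℝ) < n := by exact_mod_cast hn
    rw [inv_mul_le_iff₀ hn']
    refine (norm_sum_le _ _).trans ((Finset.sum_le_sum fun k _ => hs k).trans ?_)
    simp

/-- Borel measure on `βℕ` representing the Cesàro means along an ultrafilter. -/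
lemma exists_measure_beta [MeasurableSpace (Ultrafilter ℕ)] [BorelSpace (Ultrafilter ℕ)]
    (U : Ultrafilter ℕ) (hU : (U : Filter ℕ) ≤ atTop) :
    ∃ μ : Measure (Ultrafilter ℕ), IsProbabilityMeasure μ ∧ ∀ h : Ultrafilter ℕ → ℝ, Continuous h →
      Tendsto (fun n : ℕ => (n : ℝ)⁻¹ • ∑ k ∈ Finset.range n, h (pure k)) U (𝓝 (∫ w, h w ∂μ)) := by
  have key : ∀ h : CompactlySupportedContinuousMap (Ultrafilter ℕ) ℝ, ∃ c,
      Tendsto (fun n : ℕ => (n : ℝ)⁻¹ • ∑ k ∈ Finset.range n, h (pure k)) U (𝓝 c) := by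
    intro h
    obtain ⟨M, hM⟩ := isCompact_univ.exists_bound_of_continuousOn (f := h) h.continuous.continuousOn
    exact exists_ultralim U _ M (avg_norm_le _ M fun k => hM _ (Set.mem_univ _))
  choose L hL using key
  let Λ : CompactlySupportedContinuousMap (Ultrafilter ℕ) ℝ →ₚ[ℝ] ℝ := PositiveLinearMap.mk₀
    { toFun := L
      map_add' := fun f g => by
        refine tendsto_nhds_unique (hL (f+g)) (((hL f).add (hL g)).congr fun n => ?_)
        rw [← smul_add, ← Finset.sum_add_distrib]; rfl
      map_smul' := fun c f => by
        refine tendsto_nhds_unique (hL (c • f)) (((hL f).const_smul c).congr fun n => ?_)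
        rw [smul_comm, Finset.smul_sum]; rfl }
    (fun f hf => ge_of_tendsto (hL f) (Eventually.of_forall fun n => by
      have : ∀ k : ℕ, 0 ≤ f (pure k) := fun k => hf (pure k)
      have h2 := Finset.sum_nonneg (fun k (_ : k ∈ Finset.range n) => this k)
      exact smul_nonneg (by positivity) h2))
  have hint : ∀ h : Ultrafilter ℕ → ℝ, Continuous h →
      Tendsto (fun n : ℕ => (n : ℝ)⁻¹ • ∑ k ∈ Finset.range n, h (pure k)) U
        (𝓝 (∫ w, h w ∂(RealRMK.rieszMeasure Λ))) := by
    intro h hh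
    let h' : CompactlySupportedContinuousMap (Ultrafilter ℕ) ℝ :=
      ⟨⟨h, hh⟩, HasCompactSupport.of_compactSpace _⟩
    have := RealRMK.integral_rieszMeasure Λ h'
    change ∫ w, h w ∂_ = L h' at this
    rw [this]
    exact hL h'
  refine ⟨RealRMK.rieszMeasure Λ, ⟨?_⟩, hint⟩
  have h1 := hint (fun _ => 1) continuous_const
  have h2 : Tendsto (fun n : ℕ => (n : ℝ)⁻¹ • ∑ k ∈ Finset.range n, (1:ℝ)) U (𝓝 1) := by
    refine tendsto_const_nhds.congr' ?_
    filter_upwards [hU (eventually_ge_atTop 1)] with n hn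
    have hn' : (n:ℝ) ≠ 0 := by exact_mod_cast (by omega : n ≠ 0)
    simp [hn']
  have h3 := tendsto_nhds_unique h1 h2
  rw [integral_const, smul_eq_mul, mul_one] at h3
  exact (ENNReal.toReal_eq_one_iff _).1 h3

lemma exists_measure {X : Type*} [NormedAddCommGroup X] [NormedSpace ℂ X]
    [SecondCountableTopology X] [MeasurableSpace X] [BorelSpace X]
    (ξ : ℕ → X) (R : ℝ) (hR : ∀ k, ‖ξ k‖ ≤ R)
    (hξ : ∀ W : Ultrafilter ℕ, ∃ y : X, ∀ b : StrongDual ℂ X,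
      Tendsto (fun k => b (ξ k)) W (𝓝 (b y)))
    (U : Ultrafilter ℕ) (hU : (U : Filter ℕ) ≤ atTop) :
    ∃ μ : Measure X, IsProbabilityMeasure μ ∧ (∀ᵐ y ∂μ, ‖y‖ ≤ R) ∧
      ∀ (b : StrongDual ℂ X) (g : ℂ → ℂ), Continuous g →
      Tendsto (fun n : ℕ => (n : ℝ)⁻¹ • ∑ k ∈ Finset.range n, g (b (ξ k))) U
        (𝓝 (∫ y, g (b y) ∂μ)) := by
  letI : MeasurableSpace (Ultrafilter ℕ) := borel _
  haveI : BorelSpace (Ultrafilter ℕ) := ⟨rfl⟩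
  choose p hp using hξ
  have hR0 : 0 ≤ R := (norm_nonneg _).trans (hR 0)
  have hcont : ∀ b : StrongDual ℂ X, Continuous (fun W => b (p W)) := by
    intro b
    let f : ℕ → Metric.closedBall (0:ℂ) (‖b‖ * R) := fun k => ⟨b (ξ k), by
      rw [mem_closedBall_zero_iff]
      exact (b.le_opNorm _).trans (by gcongr; exact hR k)⟩
    have hc := continuous_ultrafilter_extend f
    have : (fun W => b (p W)) = fun W => ((Ultrafilter.extend f W : Metric.closedBall (0:ℂ) (‖b‖ * R)) : ℂ) := by
      funext W
      have h1 : Tendsto f W (𝓝 (Ultrafilter.extend f W)) := ultrafilter_extend_eq_iff.1 rfl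
      exact tendsto_nhds_unique (hp W b) ((continuous_subtype_val.tendsto _).comp h1)
    rw [this]
    exact continuous_subtype_val.comp hc
  have hpure : ∀ k, p (pure k) = ξ k := by
    intro k
    refine (NormedSpace.eq_iff_forall_dual_eq ℂ).2 fun b => ?_
    have := hp (pure k) b
    rw [Ultrafilter.coe_pure] at this
    exact (tendsto_nhds_unique this (tendsto_pure_nhds _ _))
  have hball : ∀ (c : X) (r : ℝ), IsClosed (p ⁻¹' Metric.closedBall c r) := by
    intro c r
    rcases lt_or_ge r 0 with hr | hr
    · simp [Metric.closedBall_eq_empty.2 hr]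
    have : p ⁻¹' Metric.closedBall c r =
        ⋂ b : StrongDual ℂ X, {W | ‖b (p W) - b c‖ ≤ r * ‖b‖} := by
      ext W
      simp only [Set.mem_preimage, mem_closedBall_iff_norm, Set.mem_iInter, Set.mem_setOf_eq]
      constructor
      · intro h b
        rw [← map_sub, mul_comm]
        exact (b.le_opNorm _).trans (by gcongr)
      · intro h
        refine NormedSpace.norm_le_dual_bound ℂ _ hr fun b => ?_
        rw [map_sub]
        exact h b
    rw [this]
    exact isClosed_iInter fun b => isClosed_le (((hcont b).sub continuous_const).norm) continuous_const
  have hmeas : Measurable p := by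
    refine measurable_of_isOpen fun s hs => ?_
    have h1 : ∀ x : s, ∃ r > 0, Metric.closedBall (x:X) r ⊆ s := fun x =>
      Metric.nhds_basis_closedBall.mem_iff.1 (hs.mem_nhds x.2)
    choose r hr hrs using h1
    obtain ⟨t, ht, hts⟩ := TopologicalSpace.isOpen_iUnion_countable
      (fun x : s => Metric.ball (x:X) (r x)) (fun _ => Metric.isOpen_ball)
    have : s = ⋃ x ∈ t, Metric.closedBall (x:X) (r x) := by
      apply Set.Subset.antisymm
      · intro y hy
        have hy' : y ∈ ⋃ x : s, Metric.ball (x:X) (r x) :=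
          Set.mem_iUnion.2 ⟨⟨y, hy⟩, Metric.mem_ball_self (hr _)⟩
        rw [← hts] at hy'
        simp only [Set.mem_iUnion] at hy' ⊢
        obtain ⟨x, hx, hxy⟩ := hy'
        exact ⟨x, hx, Metric.ball_subset_closedBall hxy⟩
      · simp only [Set.iUnion_subset_iff]
        exact fun x _ => hrs x
    rw [this, Set.preimage_iUnion₂]
    exact MeasurableSet.biUnion ht fun x _ => (hball _ _).measurableSet
  obtain ⟨μ, hμ, hlim⟩ := exists_measure_beta U hU
  refine ⟨μ.map p, Measure.isProbabilityMeasure_map hmeas.aemeasurable, ?_, ?_⟩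
  · rw [ae_map_iff hmeas.aemeasurable (measurableSet_le measurable_norm measurable_const)]
    refine Eventually.of_forall fun W => ?_
    refine NormedSpace.norm_le_dual_bound ℂ _ hR0 fun b => ?_
    refine le_of_tendsto (hp W b).norm (Eventually.of_forall fun k => ?_)
    rw [mul_comm]
    exact (b.le_opNorm _).trans (by gcongr; exact hR k)
  · intro b g hg
    have hgb : Continuous fun W => g (b (p W)) := hg.comp (hcont b)
    have hmap : ∫ y, g (b y) ∂(μ.map p) = ∫ W, g (b (p W)) ∂μ :=
      integral_map hmeas.aemeasurable (hg.comp b.continuous).aestronglyMeasurable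
    rw [hmap]
    have hre := hlim (fun W => (g (b (p W))).re) (Complex.continuous_re.comp hgb)
    have him := hlim (fun W => (g (b (p W))).im) (Complex.continuous_im.comp hgb)
    have hi : Integrable (fun W => g (b (p W))) μ := by
      obtain ⟨M, hM⟩ := isCompact_univ.exists_bound_of_continuousOn hgb.continuousOn
      exact Integrable.of_bound ((hg.comp b.continuous).measurable.comp hmeas).aestronglyMeasurable M
        (Eventually.of_forall fun W => hM W (Set.mem_univ _))
    have e1 : ∫ W, g (b (p W)) ∂μ = ((∫ W, (g (b (p W))).re ∂μ : ℝ) : ℂ) + ((∫ W, (g (b (p W))).im ∂μ : ℝ):ℂ) * Complex.I := by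
      exact (integral_re_add_im hi).symm
    rw [e1]
    have := ((Complex.continuous_ofReal.tendsto _).comp hre).add
      (((Complex.continuous_ofReal.tendsto _).comp him).mul_const Complex.I)
    refine this.congr fun n => ?_
    apply Complex.ext <;> simp [hpure]

end WAPH

namespace WAPH
open Filter Topology MeasureTheory

lemma tendsto_avg_zero_of_bdd {E : Type*} [NormedAddCommGroup E] [NormedSpace ℝ E]
    (U : Ultrafilter ℕ) (hU : (U : Filter ℕ) ≤ atTop) (s : ℕ → E) (M : ℝ) (hs : ∀ n, ‖s n‖ ≤ M) :
    Tendsto (fun n : ℕ => (n : ℝ)⁻¹ • s n) U (𝓝 0) := by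
  have h1 : Tendsto (fun n : ℕ => (n : ℝ)⁻¹) U (𝓝 0) :=
    (tendsto_inv_atTop_zero.comp tendsto_natCast_atTop_atTop).mono_left hU
  refine squeeze_zero_norm (a := fun n : ℕ => (n : ℝ)⁻¹ * M) (fun n => ?_) ?_
  · rw [norm_smul, Real.norm_of_nonneg (by positivity)]
    gcongr
    exact hs n
  · simpa using h1.mul_const M

lemma eigfun_iterate {X : Type*} [NormedAddCommGroup X] [NormedSpace ℂ X]
    (T : X →L[ℂ] X) (f : StrongDual ℂ X) (l : ℂ) (hf : f.comp T = l • f) (y : X) (k : ℕ) :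
    f ((T ^ k) y) = l ^ k * f y := by
  induction k with
  | zero => simp
  | succ k ih =>
    have h := congrArg (fun q : StrongDual ℂ X => q ((T ^ k) y)) hf
    simp only [ContinuousLinearMap.comp_apply, FunLike.coe_smul, Pi.smul_apply, smul_eq_mul] at h
    rw [pow_succ' T, ContinuousLinearMap.mul_apply, h, ih]
    ring

/-- weak-star limit of twisted averages -/
lemma exists_eigfun {X : Type*} [NormedAddCommGroup X] [NormedSpace ℂ X]
    (T : X →L[ℂ] X) (C : ℝ) (hC : ∀ k : ℕ, ‖T ^ k‖ ≤ C)
    (U : Ultrafilter ℕ) (hU : (U : Filter ℕ) ≤ atTop) (l : ℂ) (hl : ‖l‖ = 1) (b : StrongDual ℂ X) :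
    ∃ f : StrongDual ℂ X, f.comp T = l • f ∧ ∀ y, Tendsto (fun n : ℕ => (n : ℝ)⁻¹ •
      ∑ k ∈ Finset.range n, (starRingEnd ℂ l) ^ k * b ((T ^ k) y)) U (𝓝 (f y)) := by
  have hC0 : 0 ≤ C := (norm_nonneg _).trans (hC 0)
  have hb : ∀ y k, ‖(starRingEnd ℂ l) ^ k * b ((T ^ k) y)‖ ≤ (‖b‖ * C) * ‖y‖ := by
    intro y k
    rw [norm_mul, norm_pow, RCLike.norm_conj, hl, one_pow, one_mul, mul_assoc]
    refine (b.le_opNorm _).trans ?_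
    gcongr
    exact ((T ^ k).le_opNorm y).trans (by gcongr; exact hC k)
  have hL : ∀ y, ∃ L : ℂ, Tendsto (fun n : ℕ => (n : ℝ)⁻¹ •
      ∑ k ∈ Finset.range n, (starRingEnd ℂ l) ^ k * b ((T ^ k) y)) U (𝓝 L) := by
    intro y
    exact exists_ultralim U _ ((‖b‖ * C) * ‖y‖) (fun n => avg_norm_le _ _ (hb y) n)
  choose L hL using hL
  have hbound : ∀ y, ‖L y‖ ≤ (‖b‖ * C) * ‖y‖ := fun y =>
    le_of_tendsto (hL y).norm (Eventually.of_forall fun n => avg_norm_le _ _ (hb y) n)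
  let f : StrongDual ℂ X := LinearMap.mkContinuous
    { toFun := L
      map_add' := fun y z => by
        refine tendsto_nhds_unique (hL (y + z)) (((hL y).add (hL z)).congr fun n => ?_)
        rw [← smul_add, ← Finset.sum_add_distrib]
        simp only [map_add, mul_add]
      map_smul' := fun c y => by
        refine tendsto_nhds_unique (hL (c • y)) (((hL y).const_smul c).congr fun n => ?_)
        rw [smul_comm, Finset.smul_sum]
        simp only [map_smul, smul_eq_mul, mul_left_comm] } (‖b‖ * C) hbound
  refine ⟨f, ?_, hL⟩
  ext y
  change L (T y) = l * L y
  have hll : l * starRingEnd ℂ l = 1 := by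
    rw [Complex.mul_conj, Complex.normSq_eq_norm_sq, hl]; simp
  have h1 := (hL (T y)).sub ((hL y).const_smul l)
  have h2 : Tendsto (fun n : ℕ => (n : ℝ)⁻¹ • (l * ((starRingEnd ℂ l) ^ n * b ((T ^ n) y) - b y))) U (𝓝 0) := by
    refine tendsto_avg_zero_of_bdd U hU _ ((‖b‖ * C) * ‖y‖ + ‖b y‖) fun n => ?_
    rw [norm_mul, hl, one_mul]
    exact (norm_sub_le _ _).trans (by gcongr; exact hb y n)
  have h3 : L (T y) - l • L y = 0 := by
    refine tendsto_nhds_unique h1 (h2.congr fun n => ?_)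
    rw [smul_comm l, ← smul_sub]
    congr 1
    have := Finset.sum_range_sub (fun k => (starRingEnd ℂ l) ^ k * b ((T ^ k) y)) n
    simp only [pow_zero, one_mul, ContinuousLinearMap.one_apply] at this
    rw [← this, Finset.mul_sum, smul_eq_mul, Finset.mul_sum, ← Finset.sum_sub_distrib]
    refine Finset.sum_congr rfl fun k _ => ?_
    rw [pow_succ T, ContinuousLinearMap.mul_apply, pow_succ]
    linear_combination ((starRingEnd ℂ l) ^ k * b ((T ^ k) (T y))) * hll
  simpa [sub_eq_zero] using h3

end WAPH

namespace WAPH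
open Filter Topology MeasureTheory

structure Rep {X H : Type*} [NormedAddCommGroup X] [NormedSpace ℂ X]
    [NormedAddCommGroup H] [InnerProductSpace ℂ H]
    (T : X →L[ℂ] X) (x : X) (U : Ultrafilter ℕ) (V : H →ₗᵢ[ℂ] H)
    (i : StrongDual ℂ X →L[ℂ] H) : Prop where
  hV : ∀ b : StrongDual ℂ X, V (i b) = i (b.comp T)
  hcpt : ∀ r : ℝ, TotallyBounded (i '' Metric.closedBall 0 r)
  hJ : ∀ g : H, ∃ z : X, ∀ b, inner ℂ g (i b) = b z
  hlim : ∀ b : StrongDual ℂ X, Tendsto (fun n : ℕ => (n : ℝ)⁻¹ •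
      ∑ k ∈ Finset.range n, ‖b ((T ^ k) x)‖ ^ 2) U (𝓝 (‖i b‖ ^ 2))

section
variable {X H : Type*} [NormedAddCommGroup X] [NormedSpace ℂ X]
    [NormedAddCommGroup H] [InnerProductSpace ℂ H]
    {T : X →L[ℂ] X} {x : X} {U : Ultrafilter ℕ} {V : H →ₗᵢ[ℂ] H}
    {i : StrongDual ℂ X →L[ℂ] H}

lemma Rep.norm_eig (h : Rep T x U V i) (hU : (U : Filter ℕ) ≤ atTop) {f : StrongDual ℂ X} {l : ℂ}
    (hl : ‖l‖ = 1) (hf : f.comp T = l • f) : ‖i f‖ = ‖f x‖ := by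
  have h1 := h.hlim f
  have h2 : Tendsto (fun n : ℕ => (n : ℝ)⁻¹ •
      ∑ k ∈ Finset.range n, ‖f ((T ^ k) x)‖ ^ 2) U (𝓝 (‖f x‖ ^ 2)) := by
    refine tendsto_const_nhds.congr' ?_
    filter_upwards [hU (eventually_ge_atTop 1)] with n hn
    have hn' : (n:ℝ) ≠ 0 := by exact_mod_cast (by omega : n ≠ 0)
    simp_rw [eigfun_iterate T f l hf]
    simp [hl, hn']
  have h3 := tendsto_nhds_unique h1 h2
  exact (pow_left_inj₀ (norm_nonneg _) (norm_nonneg _) two_ne_zero).1 h3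

lemma Rep.V_eig (h : Rep T x U V i) {f : StrongDual ℂ X} {l : ℂ}
    (hf : f.comp T = l • f) : V (i f) = l • i f := by
  rw [h.hV, hf, map_smul]

lemma inner_eig_V {g : H} {l : ℂ} (hl : ‖l‖ = 1) (hg : V g = l • g) (h : H) :
    inner ℂ g (V h) = l * inner ℂ g h := by
  have hll : l * starRingEnd ℂ l = 1 := by
    rw [Complex.mul_conj, Complex.normSq_eq_norm_sq, hl]; simp
  have h1 : inner ℂ (V g) (V h) = inner ℂ g h := V.inner_map_map g h
  rw [hg, inner_smul_left] at h1
  rw [← h1]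
  linear_combination (-inner ℂ g (V h)) * hll

lemma Rep.V_iter (h : Rep T x U V i) (b : StrongDual ℂ X) (k : ℕ) :
    V^[k] (i b) = i (b.comp (T ^ k)) := by
  induction k with
  | zero => simp; rfl
  | succ k ih =>
    rw [Function.iterate_succ_apply', ih, h.hV, pow_succ]
    rfl

/-- eigenvectors orthogonal to the eigenfunctionals are orthogonal to the range -/
lemma Rep.eig_orth (h : Rep T x U V i) (hU : (U : Filter ℕ) ≤ atTop) (C : ℝ) (hC : ∀ k : ℕ, ‖T ^ k‖ ≤ C)
    {g : H} {l : ℂ} (hl : ‖l‖ = 1) (hg : V g = l • g)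
    (ho : ∀ f : StrongDual ℂ X, f.comp T = l • f → f x = 1 → inner ℂ g (i f) = 0)
    (b : StrongDual ℂ X) : inner ℂ g (i b) = 0 := by
  obtain ⟨f, hf, hlim⟩ := exists_eigfun T C hC U hU l hl b
  obtain ⟨z, hz⟩ := h.hJ g
  have hll : starRingEnd ℂ l * l = 1 := by
    rw [mul_comm, Complex.mul_conj, Complex.normSq_eq_norm_sq, hl]; simp
  have hk : ∀ k : ℕ, (starRingEnd ℂ l) ^ k * b ((T ^ k) z) = inner ℂ g (i b) := by
    intro k
    have h1 : b ((T ^ k) z) = inner ℂ g (i (b.comp (T ^ k))) := (hz (b.comp (T ^ k))).symm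
    have h2 : ∀ k : ℕ, inner ℂ g (V^[k] (i b)) = l ^ k * inner ℂ g (i b) := by
      intro k
      induction k with
      | zero => simp
      | succ k ih => rw [Function.iterate_succ_apply', inner_eig_V hl hg, ih]; ring
    rw [h1, ← h.V_iter, h2, ← mul_assoc, ← mul_pow, hll, one_pow, one_mul]
  have h3 : inner ℂ g (i b) = inner ℂ g (i f) := by
    rw [hz f]
    refine tendsto_nhds_unique ?_ (hlim z)
    refine tendsto_const_nhds.congr' ?_
    filter_upwards [hU (eventually_ge_atTop 1)] with n hn
    have hn' : (n:ℝ) ≠ 0 := by exact_mod_cast (by omega : n ≠ 0)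
    simp_rw [hk]
    have hn2 : (n:ℂ) ≠ 0 := by exact_mod_cast (by omega : n ≠ 0)
    simp [hn2]
  rw [h3]
  by_cases hx : f x = 0
  · have := h.norm_eig hU hl hf
    rw [hx, norm_zero, norm_eq_zero] at this
    rw [this, inner_zero_right]
  · have h4 := ho ((f x)⁻¹ • f) (by rw [ContinuousLinearMap.smul_comp, hf, smul_comm]) (by simp [hx])
    rw [map_smul, inner_smul_right] at h4
    simpa [hx] using h4

lemma totallyBounded_of_approx {E : Type*} [NormedAddCommGroup E] {s : Set E}
    (hs : ∀ ε > 0, ∃ t : Set E, TotallyBounded t ∧ ∀ y ∈ s, ∃ z ∈ t, dist y z < ε) :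
    TotallyBounded s := by
  rw [Metric.totallyBounded_iff]
  intro ε hε
  obtain ⟨t, ht, hst⟩ := hs (ε/2) (half_pos hε)
  obtain ⟨F, hF, htF⟩ := Metric.totallyBounded_iff.1 ht (ε/2) (half_pos hε)
  refine ⟨F, hF, fun y hy => ?_⟩
  obtain ⟨z, hz, hyz⟩ := hst y hy
  have := htF hz
  simp only [Set.mem_iUnion, Metric.mem_ball] at this ⊢
  obtain ⟨c, hc, hzc⟩ := this
  exact ⟨c, hc, by linarith [dist_triangle y z c]⟩

lemma Rep.orbit_tb (h : Rep T x U V i) (C : ℝ) (hC : ∀ k : ℕ, ‖T ^ k‖ ≤ C)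
    (g : H) (hg : g ∈ i.range.topologicalClosure) :
    TotallyBounded (Set.range fun k : ℕ => V^[k] g) := by
  refine totallyBounded_of_approx fun ε hε => ?_
  have hg' : g ∈ closure (i.range : Set H) := hg
  obtain ⟨_, ⟨b, rfl⟩, hb⟩ := Metric.mem_closure_iff.1 hg' ε hε
  refine ⟨_, h.hcpt (‖b‖ * C), ?_⟩
  rintro _ ⟨k, rfl⟩
  refine ⟨i (b.comp (T ^ k)), ⟨_, ?_, rfl⟩, ?_⟩
  · rw [mem_closedBall_zero_iff]
    exact (ContinuousLinearMap.opNorm_comp_le _ _).trans (by gcongr; exact hC k)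
  · rw [← h.V_iter]
    have hiso : Isometry (V^[k]) := by
      clear hb
      induction k with
      | zero => exact isometry_id
      | succ k ih => rw [Function.iterate_succ']; exact V.isometry.comp ih
    exact (hiso.dist_eq _ _).trans_lt hb

/-- the closed range is spanned by eigenfunctionals -/
lemma Rep.dense [CompleteSpace H] (h : Rep T x U V i) (hU : (U : Filter ℕ) ≤ atTop) (C : ℝ)
    (hC : ∀ k : ℕ, ‖T ^ k‖ ≤ C) (b : StrongDual ℂ X) :
    i b ∈ (Submodule.span ℂ {g : H | ∃ (l : ℂ) (f : StrongDual ℂ X), ‖l‖ = 1 ∧ f.comp T = l • f ∧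
      f x = 1 ∧ i f = g}).topologicalClosure := by
  set E := {g : H | ∃ (l : ℂ) (f : StrongDual ℂ X), ‖l‖ = 1 ∧ f.comp T = l • f ∧
      f x = 1 ∧ i f = g} with hE
  set K := (Submodule.span ℂ E).topologicalClosure with hK
  set R := i.range.topologicalClosure with hR
  have hKR : K ≤ R := by
    refine Submodule.topologicalClosure_mono (Submodule.span_le.2 ?_)
    rintro g ⟨l, f, -, -, -, rfl⟩
    exact ⟨f, rfl⟩
  have hRV : ∀ g ∈ R, V g ∈ R := by
    intro g hg
    have : Set.MapsTo V (i.range : Set H) (i.range : Set H) := by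
      rintro _ ⟨b, rfl⟩
      exact ⟨b.comp T, (h.hV b).symm⟩
    exact this.closure V.continuous hg
  let W : Submodule ℂ H := R ⊓ Kᗮ
  have hE0 : ∀ g ∈ W, ∀ (l : ℂ) (f : StrongDual ℂ X), ‖l‖ = 1 → f.comp T = l • f → f x = 1 →
      inner ℂ (i f) g = 0 := fun g hg l f hl hf hx =>
    (Submodule.mem_orthogonal _ _).1 hg.2 _
      (Submodule.le_topologicalClosure _ (Submodule.subset_span ⟨l, f, hl, hf, hx, rfl⟩))
  have hWV : ∀ g ∈ W, V g ∈ W := by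
    intro g hg
    refine ⟨hRV g hg.1, ?_⟩
    rw [hK, Submodule.orthogonal_closure]
    refine (Submodule.mem_orthogonal _ _).2 ?_
    intro u hu
    induction hu using Submodule.span_induction with
    | mem u hu =>
      obtain ⟨l, f, hl, hf, hx, rfl⟩ := hu
      rw [inner_eig_V hl (h.V_eig hf), hE0 g hg l f hl hf hx, mul_zero]
    | zero => simp
    | add u v _ _ hu hv => rw [inner_add_left, hu, hv, add_zero]
    | smul c u _ hu => rw [inner_smul_left, hu, mul_zero]
  have hWc : IsClosed (W : Set H) := by
    have h1 : IsClosed (R : Set H) := Submodule.isClosed_topologicalClosure _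
    exact h1.inter (Submodule.isClosed_orthogonal _)
  have : CompleteSpace W := hWc.completeSpace_coe
  let V' : W →ₗᵢ[ℂ] W :=
    { toLinearMap := V.toLinearMap.restrict hWV
      norm_map' := fun g => V.norm_map g }
  have hV' : ∀ (k : ℕ) (g : W), ((V'^[k] g : W) : H) = V^[k] g := by
    intro k g
    induction k with
    | zero => rfl
    | succ k ih => rw [Function.iterate_succ_apply', Function.iterate_succ_apply', ← ih]; rfl
  have hW0 : ∀ g ∈ W, g = 0 := by
    intro g hg
    by_contra hne
    obtain ⟨l, g', hl, hg'0, hg'⟩ := exists_eigen V' (fun w => by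
      have h1 := h.orbit_tb C hC w w.2.1
      have h2 : Set.range (fun k : ℕ => V^[k] (w:H)) = Subtype.val '' (Set.range fun k : ℕ => V'^[k] w) := by
        rw [← Set.range_comp]
        congr 1
        funext k
        exact (hV' k w).symm
      rw [h2] at h1
      exact (totallyBounded_image_iff isUniformEmbedding_subtype_val.isUniformInducing).1 h1)
      ⟨g, hg⟩ (fun hh => hne (congrArg Subtype.val hh))
    have hg'' : V (g' : H) = l • (g' : H) := congrArg Subtype.val hg'
    have h0 : ∀ b, inner ℂ (g' : H) (i b) = 0 := h.eig_orth hU C hC hl hg'' fun f hf hx => by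
      rw [← inner_conj_symm, hE0 g' g'.2 l f hl hf hx, map_zero]
    have h1 : (g' : H) ∈ Rᗮ := by
      rw [hR, Submodule.orthogonal_closure, Submodule.mem_orthogonal]
      rintro _ ⟨b, rfl⟩
      rw [← inner_conj_symm]
      exact (congrArg _ (h0 b)).trans (map_zero _)
    have h2 : inner ℂ (g' : H) (g' : H) = 0 := (Submodule.mem_orthogonal _ _).1 h1 _ g'.2.1
    exact hg'0 (Subtype.ext (inner_self_eq_zero.1 h2))
  have hKc : IsClosed (K : Set H) := Submodule.isClosed_topologicalClosure _
  have : CompleteSpace K := hKc.completeSpace_coe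
  have hP : i b - K.starProjection (i b) ∈ W :=
    ⟨Submodule.sub_mem _ (Submodule.le_topologicalClosure _ ⟨b, rfl⟩)
      (hKR (Submodule.starProjection_apply_mem _ _)),
      Submodule.sub_starProjection_mem_orthogonal _⟩
  have := sub_eq_zero.1 (hW0 _ hP)
  rw [this]
  exact Submodule.starProjection_apply_mem _ _

end
end WAPH

namespace WAPH
open Filter Topology MeasureTheory

lemma orthonormal_approx {H I : Type*} [NormedAddCommGroup H] [InnerProductSpace ℂ H] {v : I → H}
    (hv : Orthonormal ℂ v) {A : Set H} (hA : TotallyBounded A)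
    (hAv : A ⊆ closure (Submodule.span ℂ (Set.range v) : Set H)) {δ : ℝ} (hδ : 0 < δ) :
    ∃ S : Finset I, ∀ h ∈ A, ‖h - ∑ l ∈ S, inner ℂ (v l) h • v l‖ ≤ δ := by
  classical
  obtain ⟨N, hNA, hN, hAN⟩ := Metric.finite_approx_of_totallyBounded hA (δ/2) (half_pos hδ)
  have h1 : ∀ c ∈ N, ∃ S : Finset I, ∃ w ∈ Submodule.span ℂ (v '' S), dist c w < δ/2 := by
    intro c hc
    obtain ⟨w, hw, hcw⟩ := Metric.mem_closure_iff.1 (hAv (hNA hc)) (δ/2) (half_pos hδ)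
    obtain ⟨t, ht, hwt⟩ := Submodule.mem_span_finite_of_mem_span hw
    obtain ⟨S, -, hS⟩ := Finset.subset_set_image_iff.1 (by rwa [← Set.image_univ] at ht)
    refine ⟨S, w, ?_, hcw⟩
    rw [← Finset.coe_image, hS]
    exact hwt
  choose! S w hw hcw using h1
  refine ⟨hN.toFinset.biUnion S, fun h hh => ?_⟩
  set Q := hN.toFinset.biUnion S
  obtain ⟨c, hc, hhc⟩ : ∃ c ∈ N, h ∈ Metric.ball c (δ/2) := by simpa using hAN hh
  set r := h - ∑ l ∈ Q, inner ℂ (v l) h • v l with hr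
  have hrv : ∀ l ∈ Q, inner ℂ (v l) r = 0 := by
    intro l hl
    rw [hr, inner_sub_right, hv.inner_right_sum _ hl, sub_self]
  have hspan : ∀ u ∈ Submodule.span ℂ (v '' Q), inner ℂ u r = 0 := by
    intro u hu
    induction hu using Submodule.span_induction with
    | mem u hu =>
      obtain ⟨l, hl, rfl⟩ := hu
      exact hrv l hl
    | zero => simp
    | add u v _ _ hu hv => rw [inner_add_left, hu, hv, add_zero]
    | smul c u _ hu => rw [inner_smul_left, hu, mul_zero]
  have hw' : w c ∈ Submodule.span ℂ (v '' Q) := by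
    refine Submodule.span_mono (Set.image_mono ?_) (hw c hc)
    exact_mod_cast Finset.subset_biUnion_of_mem S (hN.mem_toFinset.2 hc)
  have hs' : ∑ l ∈ Q, inner ℂ (v l) h • v l ∈ Submodule.span ℂ (v '' Q) :=
    Submodule.sum_mem _ fun l hl => Submodule.smul_mem _ _ (Submodule.subset_span ⟨l, hl, rfl⟩)
  have h2 : inner ℂ r r = inner ℂ (h - w c) r := by
    have e1 : h - w c = r + (∑ l ∈ Q, inner ℂ (v l) h • v l - w c) := by rw [hr]; abel
    rw [e1, inner_add_left, hspan _ (Submodule.sub_mem _ hs' hw'), add_zero]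
  have h3 : ‖r‖ * ‖r‖ ≤ δ * ‖r‖ := by
    have e2 : ‖inner ℂ r r‖ = ‖r‖ * ‖r‖ := by
      rw [inner_self_eq_norm_sq_to_K]; simp [sq]
    rw [← e2, h2]
    refine (norm_inner_le_norm _ _).trans ?_
    gcongr
    rw [← dist_eq_norm]
    have := dist_triangle h c (w c)
    have h4 : dist h c < δ/2 := hhc
    linarith [hcw c hc]
  rcases eq_or_lt_of_le (norm_nonneg r) with h0 | h0
  · rw [← h0]; exact hδ.le
  · exact le_of_mul_le_mul_right h3 h0

variable {X H : Type*} [NormedAddCommGroup X] [NormedSpace ℂ X]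
    [NormedAddCommGroup H] [InnerProductSpace ℂ H]
    {T : X →L[ℂ] X} {x : X} {U : Ultrafilter ℕ} {V : H →ₗᵢ[ℂ] H}
    {i : StrongDual ℂ X →L[ℂ] H}

lemma Rep.main [CompleteSpace H] (h : Rep T x U V i) (hU : (U : Filter ℕ) ≤ atTop) (C : ℝ)
    (hC : ∀ k : ℕ, ‖T ^ k‖ ≤ C) (ε : ℝ) (hε : 0 < ε) :
    ∃ e ∈ Submodule.span ℂ {z : X | ∃ l : ℂ, ‖l‖ = 1 ∧ T z = l • z},
      ((∀ (l : ℂ) (f : StrongDual ℂ X), ‖l‖ = 1 → f.comp T = l • f → f x = 0) → e = 0) ∧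
      ∀ b : StrongDual ℂ X, ‖b‖ ≤ C → ∃ n : ℕ, 1 ≤ n ∧
        (n : ℝ)⁻¹ * ∑ k ∈ Finset.range n, ‖b ((T ^ k) (x - e))‖ ^ 2 < ε := by
  let I := {l : ℂ // ‖l‖ = 1 ∧ ∃ f : StrongDual ℂ X, f.comp T = l • f ∧ f x = 1}
  have hI : ∀ l : I, ∃ f : StrongDual ℂ X, f.comp T = (l:ℂ) • f ∧ f x = 1 := fun l => l.2.2
  choose F hF hFx using hI
  let v : I → H := fun l => i (F l)
  have hVv : ∀ l : I, V (v l) = (l:ℂ) • v l := fun l => h.V_eig (hF l)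
  have hv : Orthonormal ℂ v := by
    refine ⟨fun l => ?_, fun l m hlm => ?_⟩
    · exact (h.norm_eig hU l.2.1 (hF l)).trans (by rw [hFx, norm_one])
    · have h1 := inner_eig_V l.2.1 (hVv l) (v m)
      rw [hVv m, inner_smul_right] at h1
      have h2 : ((m:ℂ) - l) * inner ℂ (v l) (v m) = 0 := by rw [sub_mul, h1, sub_self]
      rcases mul_eq_zero.1 h2 with h3 | h3
      · exact absurd (Subtype.ext (sub_eq_zero.1 h3)).symm hlm
      · exact h3
  have hAv : i '' Metric.closedBall 0 C ⊆ closure (Submodule.span ℂ (Set.range v) : Set H) := by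
    rintro _ ⟨b, -, rfl⟩
    have h1 := h.dense hU C hC b
    refine Submodule.topologicalClosure_mono (Submodule.span_mono ?_) h1
    rintro _ ⟨l, f, hl, hf, hx, rfl⟩
    let l' : I := ⟨l, hl, f, hf, hx⟩
    refine ⟨l', ?_⟩
    have h2 : (f - F l').comp T = l • (f - F l') := by
      rw [ContinuousLinearMap.sub_comp, hf, hF l', smul_sub]
    have h3 := h.norm_eig hU hl h2
    rw [FunLike.coe_sub, Pi.sub_apply, hx, hFx, sub_self, norm_zero, norm_eq_zero, map_sub, sub_eq_zero] at h3
    exact h3.symm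
  set δ := min 1 (ε/2) with hδ
  have hδ0 : 0 < δ := lt_min one_pos (half_pos hε)
  have hδε : δ ^ 2 < ε := by
    have h1 : δ ≤ 1 := min_le_left _ _
    have h2 : δ ≤ ε/2 := min_le_right _ _
    nlinarith
  obtain ⟨S, hS⟩ := orthonormal_approx hv (h.hcpt C) hAv hδ0
  have hz : ∀ l : I, ∃ z : X, ∀ b, inner ℂ (v l) (i b) = b z := fun l => h.hJ (v l)
  choose z hz using hz
  have hTz : ∀ l : I, T (z l) = (l:ℂ) • z l := by
    intro l
    refine (NormedSpace.eq_iff_forall_dual_eq ℂ).2 fun b => ?_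
    have h1 := hz l (b.comp T)
    rw [← h.hV, inner_eig_V l.2.1 (hVv l), hz l b] at h1
    rw [map_smul, smul_eq_mul]
    exact h1.symm
  have hTkz : ∀ (l : I) (k : ℕ), (T ^ k) (z l) = (l:ℂ) ^ k • z l := by
    intro l k
    induction k with
    | zero => simp
    | succ k ih => rw [pow_succ, mul_apply_eq_comp, hTz, map_smul, ih, smul_smul]; ring_nf
  refine ⟨∑ l ∈ S, z l, Submodule.sum_mem _ fun l _ => Submodule.subset_span ⟨l, l.2.1, hTz l⟩, ?_, ?_⟩
  · intro h0
    refine Finset.sum_eq_zero fun l _ => ?_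
    exact absurd (h0 l (F l) l.2.1 (hF l)) (by rw [hFx]; exact one_ne_zero)
  · intro b hb
    let ψ : StrongDual ℂ X := b - ∑ l ∈ S, inner ℂ (v l) (i b) • F l
    have hψ : ‖i ψ‖ ≤ δ := by
      have h1 := hS (i b) ⟨b, by simpa using hb, rfl⟩
      simpa [ψ, map_sub, map_sum, map_smul] using h1
    have hψk : ∀ k : ℕ, ψ ((T ^ k) x) = b ((T ^ k) (x - ∑ l ∈ S, z l)) := by
      intro k
      have e1 : b ((T ^ k) (x - ∑ l ∈ S, z l)) = b ((T ^ k) x) - ∑ l ∈ S, (l:ℂ) ^ k * b (z l) := by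
        rw [map_sub, map_sub, map_sum, map_sum]
        simp_rw [hTkz, map_smul, smul_eq_mul]
      rw [e1]
      simp only [ψ, FunLike.coe_sub, Pi.sub_apply, sum_apply, FunLike.coe_smul, Pi.smul_apply, smul_eq_mul]
      congr 1
      refine Finset.sum_congr rfl fun l _ => ?_
      rw [eigfun_iterate T (F l) l (hF l), hFx, hz, mul_one, mul_comm]
    have h1 := h.hlim ψ
    have h2 : ‖i ψ‖ ^ 2 < ε := lt_of_le_of_lt (by gcongr) hδε
    obtain ⟨n, hn, hn1⟩ := ((h1.eventually (gt_mem_nhds h2)).and (hU (eventually_ge_atTop 1))).exists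
    refine ⟨n, hn1, ?_⟩
    simp_rw [hψk, smul_eq_mul] at hn
    exact hn

end WAPH

namespace WAPH
open Filter Topology MeasureTheory

section
variable {X : Type*} [NormedAddCommGroup X] [NormedSpace ℂ X] [CompleteSpace X]
  [SecondCountableTopology X] [MeasurableSpace X] [BorelSpace X]

lemma invariant_of_lim (T : X →L[ℂ] X) (x : X) (C : ℝ) (hC : ∀ k : ℕ, ‖T ^ k‖ ≤ C)
    (U : Ultrafilter ℕ) (hU : (U : Filter ℕ) ≤ atTop) (μ : Measure X) [IsProbabilityMeasure μ]
    (hμ : ∀ (b : StrongDual ℂ X) (g : ℂ → ℂ), Continuous g →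
      Tendsto (fun n : ℕ => (n : ℝ)⁻¹ • ∑ k ∈ Finset.range n, g (b ((T ^ k) x))) U
        (𝓝 (∫ y, g (b y) ∂μ))) : MeasurePreserving T μ μ := by
  refine ⟨T.continuous.measurable, ?_⟩
  have : IsProbabilityMeasure (μ.map T) :=
    Measure.isProbabilityMeasure_map T.continuous.measurable.aemeasurable
  refine Measure.ext_of_charFunDual ?_
  funext L
  rw [charFunDual_apply, charFunDual_apply]
  have hL : ∃ b : StrongDual ℂ X, ∀ y, (b y).re = L y := by
    refine ⟨StrongDual.extendRCLike (𝕜 := ℂ) L, fun y => ?_⟩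
    rw [StrongDual.extendRCLike_apply]
    simp
  obtain ⟨b, hb⟩ := hL
  let g : ℂ → ℂ := fun w => Complex.exp ((w.re : ℂ) * Complex.I)
  have hg : Continuous g := by fun_prop
  have hg1 : ∀ w, ‖g w‖ = 1 := fun w => Complex.norm_exp_ofReal_mul_I _
  have e1 : ∫ v, Complex.exp (L v * Complex.I) ∂(μ.map T) = ∫ v, g (b (T v)) ∂μ := by
    have h1 : ∫ v, Complex.exp (L v * Complex.I) ∂(μ.map T) = ∫ v, g (b v) ∂(μ.map T) := by
      simp only [g, hb]
    rw [h1]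
    exact integral_map T.continuous.measurable.aemeasurable (hg.comp b.continuous).aestronglyMeasurable
  have e2 : ∫ v, Complex.exp (L v * Complex.I) ∂μ = ∫ v, g (b v) ∂μ := by
    simp only [g, hb]
  rw [e1, e2]
  have h1 := (hμ (b.comp T) g hg).sub (hμ b g hg)
  have h2 : Tendsto (fun n : ℕ => (n : ℝ)⁻¹ • (g (b ((T ^ n) x)) - g (b x))) U (𝓝 0) :=
    tendsto_avg_zero_of_bdd U hU _ 2 fun n => (norm_sub_le _ _).trans (by rw [hg1, hg1]; norm_num)
  refine sub_eq_zero.1 (tendsto_nhds_unique h1 (h2.congr fun n => ?_))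
  rw [← smul_sub, ← Finset.sum_sub_distrib]
  congr 1
  have := Finset.sum_range_sub (fun k => g (b ((T ^ k) x))) n
  simp only [pow_zero, one_apply_eq_self] at this
  rw [← this]
  refine Finset.sum_congr rfl fun k _ => ?_
  rw [pow_succ' T, mul_apply_eq_comp]
  rfl

lemma norm_toLp_le (μ : Measure X) [IsProbabilityMeasure μ] (hid : MemLp id 2 μ)
    (s : SimpleFunc X X) (hs : MemLp s 2 μ) (δ : ℝ) (hδ : 0 ≤ δ) (h : eLpNorm (id - ⇑s) 2 μ ≤ ENNReal.ofReal δ)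
    (d : StrongDual ℂ X) (c : ℝ) (hc0 : 0 ≤ c) (hc : ∀ y, ‖d (s y)‖ ≤ c) :
    ‖StrongDual.toLp μ 2 d‖ ≤ ‖d‖ * δ + c := by
  rw [StrongDual.toLp_apply hid, Lp.norm_toLp]
  refine ENNReal.toReal_le_of_le_ofReal (by positivity) ?_
  have e1 : (d : X → ℂ) = (fun y => d ((id - ⇑s : X → X) y)) + fun y => d (s y) := by
    funext y; simp
  have m2 : AEStronglyMeasurable (fun y => d (s y)) μ :=
    d.continuous.comp_aestronglyMeasurable s.aestronglyMeasurable
  have m1 : AEStronglyMeasurable (fun y => d ((id - ⇑s : X → X) y)) μ :=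
    d.continuous.comp_aestronglyMeasurable (hid.sub hs).aestronglyMeasurable
  rw [e1]
  refine (eLpNorm_add_le m1 m2 (by norm_num)).trans ?_
  rw [ENNReal.ofReal_add (by positivity) hc0]
  gcongr
  · refine (eLpNorm_le_mul_eLpNorm_of_ae_le_mul (Eventually.of_forall fun y => d.le_opNorm _) 2).trans ?_
    rw [ENNReal.ofReal_mul (norm_nonneg _)]
    gcongr
  · refine (eLpNorm_le_of_ae_bound (C := c) (Eventually.of_forall hc)).trans ?_
    simp

lemma toLp_tb (μ : Measure X) [IsProbabilityMeasure μ] (hid : MemLp id 2 μ) (r : ℝ) :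
    TotallyBounded (StrongDual.toLp (𝕜 := ℂ) μ 2 '' Metric.closedBall 0 r) := by
  rw [Metric.totallyBounded_iff]
  intro ε hε
  set δ := ε / (4 * (|r| + 1)) with hδ
  have hr1 : 0 < |r| + 1 := by positivity
  have hδ0 : 0 < δ := by positivity
  obtain ⟨s, hs, hsm⟩ := hid.exists_simpleFunc_eLpNorm_sub_lt (by norm_num) (ε := ENNReal.ofReal δ) (by simpa using hδ0)
  let q : StrongDual ℂ X → (s.range → ℂ) := fun b c => b c
  have hq : TotallyBounded (q '' Metric.closedBall 0 r) := by
    have : Bornology.IsBounded (q '' Metric.closedBall 0 r) := by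
      rw [isBounded_iff_forall_norm_le]
      refine ⟨∑ c : s.range, |r| * ‖(c:X)‖, ?_⟩
      rintro _ ⟨b, hb, rfl⟩
      refine (pi_norm_le_iff_of_nonneg (Finset.sum_nonneg fun _ _ => by positivity)).2 fun c => ?_
      have hb' : ‖b‖ ≤ |r| := (mem_closedBall_zero_iff.1 hb).trans (le_abs_self _)
      refine (b.le_opNorm _).trans ?_
      refine le_trans ?_ (Finset.single_le_sum (f := fun c : s.range => |r| * ‖(c:X)‖) (fun _ _ => by positivity) (Finset.mem_univ c))
      gcongr
    exact this.isCompact_closure.totallyBounded.subset subset_closure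
  obtain ⟨N, hNA, hN, hAN⟩ := Metric.finite_approx_of_totallyBounded hq (ε/4) (by positivity)
  have h1 : ∀ c ∈ N, ∃ b : StrongDual ℂ X, ‖b‖ ≤ r ∧ q b = c := by
    intro c hc
    obtain ⟨b, hb, rfl⟩ := hNA hc
    exact ⟨b, mem_closedBall_zero_iff.1 hb, rfl⟩
  choose! B hB hqB using h1
  refine ⟨(fun c => StrongDual.toLp (𝕜 := ℂ) μ 2 (B c)) '' N, hN.image _, ?_⟩
  rintro _ ⟨b, hb, rfl⟩
  obtain ⟨c, hc, hbc⟩ : ∃ c ∈ N, q b ∈ Metric.ball c (ε/4) := by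
    have := hAN ⟨b, hb, rfl⟩
    simpa using this
  refine Set.mem_biUnion ⟨c, hc, rfl⟩ ?_
  rw [Metric.mem_ball, dist_eq_norm, ← map_sub]
  have hd : ‖b - B c‖ ≤ 2 * |r| := by
    refine (norm_sub_le _ _).trans ?_
    have hb' : ‖b‖ ≤ |r| := (mem_closedBall_zero_iff.1 hb).trans (le_abs_self _)
    linarith [hB c hc, le_abs_self r]
  have h2 := norm_toLp_le μ hid s hsm δ hδ0.le hs.le (b - B c) (ε/4) (by positivity) (fun y => by
    have h3 : dist (q b) (q (B c)) < ε/4 := by rw [hqB c hc]; exact hbc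
    have h4 := (dist_le_pi_dist (q b) (q (B c)) ⟨s y, s.mem_range_self y⟩).trans h3.le
    rw [dist_eq_norm] at h4
    simpa [q] using h4)
  have h5 : ‖b - B c‖ * δ ≤ ε / 2 := by
    calc ‖b - B c‖ * δ ≤ (2 * (|r| + 1)) * δ := by gcongr; linarith
      _ = ε / 2 := by rw [hδ]; field_simp; ring
  linarith

lemma rep_of_measure (T : X →L[ℂ] X) (x : X) (R : ℝ)
    (U : Ultrafilter ℕ) (μ : Measure X) [IsProbabilityMeasure μ] (hR : ∀ᵐ y ∂μ, ‖y‖ ≤ R)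
    (hμ : ∀ (b : StrongDual ℂ X) (g : ℂ → ℂ), Continuous g →
      Tendsto (fun n : ℕ => (n : ℝ)⁻¹ • ∑ k ∈ Finset.range n, g (b ((T ^ k) x))) U
        (𝓝 (∫ y, g (b y) ∂μ))) (hT : MeasurePreserving T μ μ) :
    Rep T x U (Lp.compMeasurePreservingₗᵢ ℂ (E := ℂ) (p := 2) T hT) (StrongDual.toLp μ 2) := by
  have hid : MemLp id 2 μ := MemLp.of_bound aestronglyMeasurable_id R hR
  refine ⟨fun b => ?_, toLp_tb μ hid, fun g => ?_, fun b => ?_⟩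
  · rw [StrongDual.toLp_apply hid, StrongDual.toLp_apply hid]
    rfl
  · have hg1 : Integrable g μ := (Lp.memLp g).integrable (by norm_num)
    have hg2 : Integrable (fun y => starRingEnd ℂ (g y)) μ := by
      have := (Complex.conjCLE : ℂ →L[ℝ] ℂ).integrable_comp hg1
      exact this
    have hint : Integrable (fun y => starRingEnd ℂ (g y) • y) μ := by
      exact Integrable.smul_bdd hg2 R aestronglyMeasurable_id hR
    refine ⟨∫ y, starRingEnd ℂ (g y) • y ∂μ, fun b => ?_⟩
    rw [← ContinuousLinearMap.integral_comp_comm b hint, L2.inner_def, StrongDual.toLp_apply hid]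
    refine integral_congr_ae ?_
    filter_upwards [MemLp.coeFn_toLp (f := b) (hid.continuousLinearMap_comp b)] with y hy
    rw [hy, RCLike.inner_apply, map_smul, smul_eq_mul, mul_comm]
  · have h1 := hμ b (fun w => ((‖w‖ ^ 2 : ℝ) : ℂ)) (by fun_prop)
    have h2 : ∫ y, ((‖b y‖ ^ 2 : ℝ) : ℂ) ∂μ = ((‖StrongDual.toLp μ 2 b‖ ^ 2 : ℝ) : ℂ) := by
      have h3 : inner ℂ (StrongDual.toLp μ 2 b) (StrongDual.toLp μ 2 b) = ((‖StrongDual.toLp μ 2 b‖ ^ 2 : ℝ) : ℂ) := by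
        rw [inner_self_eq_norm_sq_to_K]; simp
      rw [← h3, L2.inner_def, StrongDual.toLp_apply hid]
      refine integral_congr_ae ?_
      filter_upwards [MemLp.coeFn_toLp (f := b) (hid.continuousLinearMap_comp b)] with y hy
      rw [hy, inner_self_eq_norm_sq_to_K]; simp
    rw [h2] at h1
    have h4 := (Complex.continuous_re.tendsto _).comp h1
    rw [Complex.ofReal_re] at h4
    refine h4.congr fun n => ?_
    simp only [Function.comp_apply, Complex.smul_re, Complex.re_sum, Complex.ofReal_re]

end

lemma lemmaL {X : Type*} [NormedAddCommGroup X] [NormedSpace ℂ X] [CompleteSpace X]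
    [SecondCountableTopology X] (T : X →L[ℂ] X) (C : ℝ) (hC : ∀ k : ℕ, ‖T ^ k‖ ≤ C) (x : X)
    (hx : ∀ W : Ultrafilter ℕ, ∃ y : X, ∀ b : StrongDual ℂ X,
      Tendsto (fun k : ℕ => b ((T ^ k) x)) W (𝓝 (b y)))
    (ε : ℝ) (hε : 0 < ε) :
    ∃ e ∈ Submodule.span ℂ {z : X | ∃ l : ℂ, ‖l‖ = 1 ∧ T z = l • z},
      ((∀ (l : ℂ) (f : StrongDual ℂ X), ‖l‖ = 1 → f.comp T = l • f → f x = 0) → e = 0) ∧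
      ∀ b : StrongDual ℂ X, ‖b‖ ≤ C → ∃ n : ℕ, 1 ≤ n ∧
        (n : ℝ)⁻¹ * ∑ k ∈ Finset.range n, ‖b ((T ^ k) (x - e))‖ ^ 2 < ε := by
  borelize X
  have hU : ((hyperfilter ℕ : Ultrafilter ℕ) : Filter ℕ) ≤ atTop := Nat.hyperfilter_le_atTop
  obtain ⟨μ, hμp, hR, hμ⟩ := exists_measure (fun k => (T ^ k) x) (C * ‖x‖)
    (fun k => ((T ^ k).le_opNorm x).trans (by gcongr; exact hC k)) hx (hyperfilter ℕ) hU
  exact (rep_of_measure T x _ _ μ hR hμ (invariant_of_lim T x C hC _ hU μ hμ)).main hU C hC ε hε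

end WAPH

namespace WAPH
open Filter Topology MeasureTheory

lemma uniformize {X : Type*} [NormedAddCommGroup X] [NormedSpace ℂ X]
    (T : X →L[ℂ] X) (C : ℝ) (hC : ∀ k : ℕ, ‖T ^ k‖ ≤ C) (y : X) (ε : ℝ) (hε : 0 < ε)
    (h : ∀ b : StrongDual ℂ X, ‖b‖ ≤ C → ∃ n : ℕ, 1 ≤ n ∧
        (n : ℝ)⁻¹ * ∑ k ∈ Finset.range n, ‖b ((T ^ k) y)‖ ^ 2 < ε) :
    ∀ᶠ n : ℕ in atTop, ∀ b : StrongDual ℂ X, ‖b‖ ≤ 1 →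
      (n : ℝ)⁻¹ * ∑ k ∈ Finset.range n, ‖b ((T ^ k) y)‖ ^ 2 ≤ 2 * ε := by
  have hC0 : 0 ≤ C := (norm_nonneg _).trans (hC 0)
  obtain ⟨N, hN⟩ : ∃ N : ℕ, ∀ b : StrongDual ℂ X, ‖b‖ ≤ C → ∃ n : ℕ, 1 ≤ n ∧ n ≤ N ∧
        (n : ℝ)⁻¹ * ∑ k ∈ Finset.range n, ‖b ((T ^ k) y)‖ ^ 2 < ε := by
    have hc := WeakDual.isCompact_closedBall (𝕜 := ℂ) (E := X) 0 C
    obtain ⟨N, hN⟩ := hc.elim_directed_cover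
      (fun N : ℕ => {b : WeakDual ℂ X | ∃ n : ℕ, 1 ≤ n ∧ n ≤ N ∧
        (n : ℝ)⁻¹ * ∑ k ∈ Finset.range n, ‖b ((T ^ k) y)‖ ^ 2 < ε}) (fun N => by
        have : {b : WeakDual ℂ X | ∃ n : ℕ, 1 ≤ n ∧ n ≤ N ∧
          (n : ℝ)⁻¹ * ∑ k ∈ Finset.range n, ‖b ((T ^ k) y)‖ ^ 2 < ε} =
          ⋃ n : ℕ, ⋃ _ : 1 ≤ n ∧ n ≤ N, {b : WeakDual ℂ X |
            (n : ℝ)⁻¹ * ∑ k ∈ Finset.range n, ‖b ((T ^ k) y)‖ ^ 2 < ε} := by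
          ext b; simp [and_assoc]
        rw [this]
        refine isOpen_iUnion fun n => isOpen_iUnion fun _ => isOpen_lt ?_ continuous_const
        refine continuous_const.mul (continuous_finsetSum _ fun k _ => ?_)
        exact ((WeakDual.eval_continuous _).norm).pow 2)
      (fun b hb => by
        obtain ⟨n, hn, hn'⟩ := h (WeakDual.toStrongDual b) (by simpa using hb)
        exact Set.mem_iUnion.2 ⟨n, n, hn, le_rfl, hn'⟩)
      (directed_of_isDirected_le fun N M hNM b hb => by
        obtain ⟨n, h1, h2, h3⟩ := hb
        exact ⟨n, h1, h2.trans hNM, h3⟩)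
    refine ⟨N, fun b hb => ?_⟩
    exact hN (show StrongDual.toWeakDual b ∈ _ by simpa using hb)
  set B := (C * ‖y‖) ^ 2 with hB
  have hB0 : 0 ≤ B := by positivity
  have hbk : ∀ b : StrongDual ℂ X, ‖b‖ ≤ 1 → ∀ k : ℕ, ‖b ((T ^ k) y)‖ ^ 2 ≤ B := by
    intro b hb k
    have : ‖b ((T ^ k) y)‖ ≤ C * ‖y‖ := by
      refine (b.le_opNorm _).trans ?_
      calc ‖b‖ * ‖(T ^ k) y‖ ≤ 1 * (C * ‖y‖) := by
            gcongr
            exact ((T ^ k).le_opNorm y).trans (by gcongr; exact hC k)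
        _ = _ := one_mul _
    rw [hB]; gcongr
  have key : ∀ m : ℕ, ∀ b : StrongDual ℂ X, ‖b‖ ≤ 1 → ∀ j : ℕ,
      ∑ k ∈ Finset.range m, ‖b ((T ^ (j + k)) y)‖ ^ 2 ≤ m * ε + N * B := by
    intro m
    induction m using Nat.strong_induction_on with
    | _ m ih =>
    intro b hb j
    obtain ⟨n, hn1, hnN, hn⟩ := hN (b.comp (T ^ j)) (by
      refine (ContinuousLinearMap.opNorm_comp_le _ _).trans ?_
      calc ‖b‖ * ‖T ^ j‖ ≤ 1 * C := by gcongr; exact hC j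
        _ = C := one_mul _)
    rcases le_or_gt n m with hnm | hnm
    · obtain ⟨m', rfl⟩ := Nat.exists_eq_add_of_le hnm
      have h1 := ih m' (by omega) b hb (j + n)
      rw [Finset.sum_range_add]
      have h2 : ∑ k ∈ Finset.range n, ‖b ((T ^ (j + k)) y)‖ ^ 2 ≤ n * ε := by
        have hn0 : (0:ℝ) < n := by exact_mod_cast hn1
        rw [inv_mul_lt_iff₀ hn0] at hn
        refine le_trans (le_of_eq ?_) hn.le
        refine Finset.sum_congr rfl fun k _ => ?_
        rw [pow_add]; rfl
      simp_rw [add_assoc] at h1 ⊢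
      rw [Nat.cast_add]
      linarith
    · calc ∑ k ∈ Finset.range m, ‖b ((T ^ (j + k)) y)‖ ^ 2 ≤ ∑ k ∈ Finset.range m, B :=
            Finset.sum_le_sum fun k _ => hbk b hb _
        _ = m * B := by simp
        _ ≤ N * B := by gcongr; omega
        _ ≤ m * ε + N * B := by have : 0 ≤ m * ε := by positivity
                                linarith
  have hlim : Tendsto (fun n : ℕ => (n:ℝ)⁻¹ * (N * B)) atTop (𝓝 0) := by
    have := ((tendsto_inv_atTop_zero (𝕜 := ℝ)).comp tendsto_natCast_atTop_atTop).mul_const (N * B)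
    simpa using this
  filter_upwards [hlim.eventually (gt_mem_nhds hε), eventually_ge_atTop 1] with n hn hn1 b hb
  have hn0 : (0:ℝ) < n := by exact_mod_cast hn1
  have h1 := key n b hb 0
  simp only [zero_add] at h1
  calc (n : ℝ)⁻¹ * ∑ k ∈ Finset.range n, ‖b ((T ^ k) y)‖ ^ 2 ≤ (n:ℝ)⁻¹ * (n * ε + N * B) := by gcongr
    _ = ε + (n:ℝ)⁻¹ * (N * B) := by field_simp
    _ ≤ 2 * ε := by linarith

end WAPH

namespace WAPH
open Filter Topology MeasureTheory

section
variable {X : Type*} [NormedAddCommGroup X] [NormedSpace ℂ X]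

/-- span of unimodular eigenvectors -/
def Esp (T : X →L[ℂ] X) : Submodule ℂ X :=
  Submodule.span ℂ {z : X | ∃ l : ℂ, ‖l‖ = 1 ∧ T z = l • z}

lemma eigvec_iterate (T : X →L[ℂ] X) {z : X} {l : ℂ} (hz : T z = l • z) (k : ℕ) :
    (T ^ k) z = l ^ k • z := by
  induction k with
  | zero => simp
  | succ k ih => rw [pow_succ, mul_apply_eq_comp, hz, map_smul, ih, smul_smul]; ring_nf

lemma exists_rec (T : X →L[ℂ] X) : ∃ G : Filter ℕ, G.NeBot ∧ G ≤ atTop ∧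
    ∀ e ∈ Esp T, Tendsto (fun n => (T ^ n) e) G (𝓝 e) := by
  let W : Ultrafilter ℕ := hyperfilter ℕ
  have hW : (W : Filter ℕ) ≤ atTop := Nat.hyperfilter_le_atTop
  let G : Filter ℕ := map (fun p : ℕ × ℕ => p.2 - p.1) ((W : Filter ℕ).curry W)
  have hG : ∀ p : ℕ → Prop, (∀ᶠ n in G, p n) ↔ ∀ᶠ m in (W : Filter ℕ), ∀ᶠ n in (W : Filter ℕ), p (n - m) := by
    intro p
    rw [eventually_map, eventually_curry_iff]
  have hGtop : G ≤ atTop := by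
    rw [← tendsto_id', tendsto_atTop]
    intro k
    rw [hG]
    refine Eventually.of_forall fun m => ?_
    filter_upwards [hW (eventually_ge_atTop (k + m))] with n hn
    simp only [id]; omega
  have hGne : G.NeBot := by
    rw [neBot_iff]
    intro h
    have h1 : ∀ᶠ n in G, False := by rw [h]; exact eventually_bot
    rw [hG] at h1
    simp at h1
    exact W.neBot.ne h1
  refine ⟨G, hGne, hGtop, fun e he => ?_⟩
  have hpow : ∀ l : ℂ, ‖l‖ = 1 → Tendsto (fun n : ℕ => l ^ n) G (𝓝 1) := by
    intro l hl
    obtain ⟨c, hc⟩ := exists_ultralim W (fun n => l ^ n) 1 (fun n => by simp [hl])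
    rw [Metric.tendsto_nhds] at hc ⊢
    intro ε hε
    rw [hG]
    filter_upwards [hc (ε/2) (half_pos hε)] with m hm
    filter_upwards [hc (ε/2) (half_pos hε), hW (eventually_ge_atTop m)] with n hn hmn
    have h1 : dist (l ^ (n - m)) 1 = dist (l ^ n) (l ^ m) := by
      rw [dist_eq_norm, dist_eq_norm]
      have : l ^ n - l ^ m = l ^ m * (l ^ (n - m) - 1) := by
        rw [mul_sub, ← pow_add, Nat.add_sub_cancel' hmn, mul_one]
      rw [this, norm_mul, norm_pow, hl, one_pow, one_mul]
    rw [h1]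
    linarith [dist_triangle_right (l ^ n) (l ^ m) c]
  induction he using Submodule.span_induction with
  | mem z hz =>
    obtain ⟨l, hl, hz⟩ := hz
    simp_rw [eigvec_iterate T hz]
    simpa using (hpow l hl).smul_const z
  | zero => simp
  | add u v _ _ hu hv => simpa only [map_add] using hu.add hv
  | smul c u _ hu => simpa only [map_smul] using hu.const_smul c

lemma rec_bound (T : X →L[ℂ] X) (C : ℝ) (hC : ∀ k : ℕ, ‖T ^ k‖ ≤ C) (d : X)
    (hd : d ∈ closure (Esp T : Set X)) (k : ℕ) : ‖d‖ ≤ C * ‖(T ^ k) d‖ := by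
  obtain ⟨G, hG, hGtop, hrec⟩ := exists_rec T
  have hcl : IsClosed {d : X | ‖d‖ ≤ C * ‖(T ^ k) d‖} :=
    isClosed_le continuous_norm (continuous_const.mul (T ^ k).continuous.norm)
  refine closure_minimal (fun e he => ?_) hcl hd
  refine le_of_tendsto (hrec e he).norm ?_
  filter_upwards [hGtop (eventually_ge_atTop k)] with n hn
  obtain ⟨m, rfl⟩ := Nat.exists_eq_add_of_le' hn
  rw [pow_add, mul_apply_eq_comp]
  exact ((T ^ m).le_opNorm _).trans (by gcongr; exact hC m)

lemma orbit_tb_X (T : X →L[ℂ] X) (C : ℝ) (hC : ∀ k : ℕ, ‖T ^ k‖ ≤ C) (d : X)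
    (hd : d ∈ closure (Esp T : Set X)) : TotallyBounded (Set.range fun k : ℕ => (T ^ k) d) := by
  have hC0 : 0 ≤ C := (norm_nonneg _).trans (hC 0)
  have h1 : ∀ e ∈ Esp T, TotallyBounded (Set.range fun k : ℕ => (T ^ k) e) := by
    intro e he
    induction he using Submodule.span_induction with
    | mem z hz =>
      obtain ⟨l, hl, hz⟩ := hz
      have hc : IsCompact ((fun c : ℂ => c • z) '' Metric.closedBall 0 1) :=
        (isCompact_closedBall _ _).image (by fun_prop)
      refine hc.totallyBounded.subset ?_
      rintro _ ⟨k, rfl⟩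
      exact ⟨l ^ k, by simp [hl], (eigvec_iterate T hz k).symm⟩
    | zero =>
      refine (isCompact_singleton (x := (0:X))).totallyBounded.subset ?_
      rintro _ ⟨k, rfl⟩
      simp
    | add u v _ _ hu hv =>
      rw [Metric.totallyBounded_iff] at hu hv ⊢
      intro ε hε
      obtain ⟨F, hF, hF'⟩ := hu (ε/2) (half_pos hε)
      obtain ⟨F2, hF2, hF2'⟩ := hv (ε/2) (half_pos hε)
      refine ⟨Set.image2 (fun p q => p + q) F F2, hF.image2 _ hF2, ?_⟩
      rintro _ ⟨k, rfl⟩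
      have h2 := hF' ⟨k, rfl⟩
      have h3 := hF2' ⟨k, rfl⟩
      simp only [Set.mem_iUnion, exists_prop, Metric.mem_ball] at h2 h3
      obtain ⟨p, hp, hp'⟩ := h2
      obtain ⟨q, hq, hq'⟩ := h3
      refine Set.mem_biUnion (Set.mem_image2_of_mem hp hq) ?_
      rw [Metric.mem_ball]
      simp only [map_add]
      linarith [dist_add_add_le ((T ^ k) u) ((T ^ k) v) p q]
    | smul c u _ hu =>
      have h2 := hu.image (f := fun p : X => c • p) (uniformContinuous_const_smul c)
      refine h2.subset ?_
      rintro _ ⟨k, rfl⟩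
      exact ⟨(T ^ k) u, ⟨k, rfl⟩, (map_smul _ _ _).symm⟩
  refine totallyBounded_of_approx fun ε hε => ?_
  obtain ⟨e, he, hde⟩ := Metric.mem_closure_iff.1 hd (ε / (C + 1)) (by positivity)
  refine ⟨_, h1 e he, ?_⟩
  rintro _ ⟨k, rfl⟩
  refine ⟨(T ^ k) e, ⟨k, rfl⟩, ?_⟩
  rw [dist_eq_norm] at hde ⊢
  rw [← map_sub]
  calc ‖(T ^ k) (d - e)‖ ≤ C * ‖d - e‖ := ((T ^ k).le_opNorm _).trans (by gcongr; exact hC k)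
    _ ≤ (C + 1) * ‖d - e‖ := by gcongr; linarith
    _ < ε := by rwa [lt_div_iff₀' (by positivity)] at hde

lemma eq_zero_of_eig [CompleteSpace X] [SecondCountableTopology X]
    (T : X →L[ℂ] X) (C : ℝ) (hC : ∀ k : ℕ, ‖T ^ k‖ ≤ C) (d : X)
    (hx : ∀ W : Ultrafilter ℕ, ∃ y : X, ∀ b : StrongDual ℂ X,
      Tendsto (fun k : ℕ => b ((T ^ k) d)) W (𝓝 (b y)))
    (hd : d ∈ closure (Esp T : Set X))
    (h0 : ∀ (l : ℂ) (f : StrongDual ℂ X), ‖l‖ = 1 → f.comp T = l • f → f d = 0) : d = 0 := by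
  have hC0 : 0 ≤ C := (norm_nonneg _).trans (hC 0)
  have key : ∀ ρ > 0, ‖d‖ ≤ C * (3 * ρ) := by
    intro ρ hρ
    obtain ⟨N, -, hN, hcov⟩ := Metric.finite_approx_of_totallyBounded (orbit_tb_X T C hC d hd) ρ hρ
    lift N to Finset X using hN
    have hb : ∀ c : X, ∃ b : StrongDual ℂ X, ‖b‖ ≤ 1 ∧ b c = ‖c‖ := fun c => exists_dual_vector'' ℂ c
    choose b hb1 hbc using hb
    set ε := ρ ^ 2 / (2 * (N.card + 1)) with hε
    have hε0 : 0 < ε := by positivity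
    obtain ⟨e, -, he0, he⟩ := lemmaL T C hC d hx ε hε0
    rw [he0 h0, sub_zero] at he
    obtain ⟨n, hn, hn1⟩ := ((uniformize T C hC d ε hε0 he).and (eventually_ge_atTop 1)).exists
    have hn0 : (0:ℝ) < n := by exact_mod_cast hn1
    obtain ⟨k, hk⟩ : ∃ k : ℕ, ∑ c ∈ N, ‖b c ((T ^ k) d)‖ ^ 2 < ρ ^ 2 := by
      by_contra! hcon
      have h1 : ρ ^ 2 ≤ (n:ℝ)⁻¹ * ∑ k ∈ Finset.range n, ∑ c ∈ N, ‖b c ((T ^ k) d)‖ ^ 2 := by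
        have h2 := Finset.sum_le_sum (fun k (_ : k ∈ Finset.range n) => hcon k)
        rw [le_inv_mul_iff₀ hn0]
        simpa using h2
      rw [Finset.sum_comm, Finset.mul_sum] at h1
      have h3 := Finset.sum_le_sum (fun c (_ : c ∈ N) => hn (b c) (hb1 c))
      have h4 : ∑ c ∈ N, 2 * ε < ρ ^ 2 := by
        rw [Finset.sum_const, nsmul_eq_mul, hε]
        have : (N.card : ℝ) * (2 * (ρ ^ 2 / (2 * (N.card + 1)))) = ρ ^ 2 - ρ ^ 2 / (N.card + 1) := by
          field_simp; ring
        rw [this]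
        have : 0 < ρ ^ 2 / ((N.card : ℝ) + 1) := by positivity
        linarith
      linarith
    obtain ⟨c, hc, hkc⟩ : ∃ c ∈ N, (T ^ k) d ∈ Metric.ball c ρ := by
      have := hcov ⟨k, rfl⟩
      simpa only [Set.mem_iUnion, exists_prop, Finset.mem_coe] using this
    have h5 : ‖b c ((T ^ k) d)‖ < ρ := by
      have := (Finset.single_le_sum (f := fun c => ‖b c ((T ^ k) d)‖ ^ 2) (fun _ _ => by positivity) hc).trans_lt hk
      exact lt_of_pow_lt_pow_left₀ 2 hρ.le this
    rw [Metric.mem_ball, dist_eq_norm] at hkc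
    have h6 : ‖c‖ ≤ ‖b c ((T ^ k) d)‖ + ‖(T ^ k) d - c‖ := by
      have e1 : (‖c‖ : ℂ) = b c ((T ^ k) d) - b c ((T ^ k) d - c) := by rw [map_sub, hbc]; ring
      have e2 : ‖c‖ = ‖(‖c‖ : ℂ)‖ := by simp
      rw [e2, e1]
      refine (norm_sub_le _ _).trans ?_
      gcongr
      exact ((b c).le_opNorm _).trans (mul_le_of_le_one_left (norm_nonneg _) (hb1 c))
    have h7 : ‖(T ^ k) d‖ ≤ ‖(T ^ k) d - c‖ + ‖c‖ := by
      simpa using norm_add_le ((T ^ k) d - c) c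
    refine (rec_bound T C hC d hd k).trans ?_
    gcongr
    linarith
  by_contra hne
  have hpos : 0 < ‖d‖ := norm_pos_iff.2 hne
  have h1 := key (‖d‖ / (6 * (C + 1))) (by positivity)
  have h2 : C * (3 * (‖d‖ / (6 * (C + 1)))) = (C / (C + 1)) * (‖d‖ / 2) := by field_simp; ring
  have h3 : C / (C + 1) ≤ 1 := by rw [div_le_one (by positivity)]; linarith
  have h4 : (C / (C + 1)) * (‖d‖ / 2) ≤ ‖d‖ / 2 := mul_le_of_le_one_left (by positivity) h3
  linarith

end
end WAPH

namespace WAPH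
open Filter Topology MeasureTheory

section
variable {X : Type*} [NormedAddCommGroup X] [NormedSpace ℂ X]

lemma wavg_small (T : X →L[ℂ] X) (β : ℕ → ℂ) (M : ℝ) (hβ : ∀ k, ‖β k‖ ≤ M) (y : X) (η : ℝ) (hη : 0 ≤ η) (n : ℕ)
    (h : ∀ b : StrongDual ℂ X, ‖b‖ ≤ 1 →
      (n : ℝ)⁻¹ * ∑ k ∈ Finset.range n, ‖b ((T ^ k) y)‖ ^ 2 ≤ η ^ 2) :
    ‖(n : ℝ)⁻¹ • ∑ k ∈ Finset.range n, β k • (T ^ k) y‖ ≤ M * η := by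
  have hM : 0 ≤ M := (norm_nonneg _).trans (hβ 0)
  rcases Nat.eq_zero_or_pos n with rfl | hn
  · simp; positivity
  have hn0 : (0:ℝ) < n := by exact_mod_cast hn
  obtain ⟨b, hb1, hb⟩ := exists_dual_vector'' ℂ (∑ k ∈ Finset.range n, β k • (T ^ k) y)
  have h1 : ‖∑ k ∈ Finset.range n, β k • (T ^ k) y‖ ≤ M * ∑ k ∈ Finset.range n, ‖b ((T ^ k) y)‖ := by
    have e1 : ‖∑ k ∈ Finset.range n, β k • (T ^ k) y‖ = ‖b (∑ k ∈ Finset.range n, β k • (T ^ k) y)‖ := by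
      rw [hb]; simp
    rw [e1, map_sum, Finset.mul_sum]
    refine norm_sum_le_of_le _ fun k _ => ?_
    rw [map_smul, norm_smul]
    gcongr
    exact hβ k
  have h2 : (n:ℝ)⁻¹ * ∑ k ∈ Finset.range n, ‖b ((T ^ k) y)‖ ≤ η := by
    refine (sq_le_sq₀ (by positivity) hη).1 ?_
    have h3 := sq_sum_le_card_mul_sum_sq (s := Finset.range n) (f := fun k => ‖b ((T ^ k) y)‖)
    rw [Finset.card_range] at h3
    calc ((n:ℝ)⁻¹ * ∑ k ∈ Finset.range n, ‖b ((T ^ k) y)‖) ^ 2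
        = (n:ℝ)⁻¹ ^ 2 * (∑ k ∈ Finset.range n, ‖b ((T ^ k) y)‖) ^ 2 := by ring
      _ ≤ (n:ℝ)⁻¹ ^ 2 * (n * ∑ k ∈ Finset.range n, ‖b ((T ^ k) y)‖ ^ 2) := by gcongr
      _ = (n:ℝ)⁻¹ * ∑ k ∈ Finset.range n, ‖b ((T ^ k) y)‖ ^ 2 := by field_simp
      _ ≤ η ^ 2 := h b hb1
  rw [norm_smul, Real.norm_of_nonneg (by positivity)]
  calc (n:ℝ)⁻¹ * ‖∑ k ∈ Finset.range n, β k • (T ^ k) y‖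
      ≤ (n:ℝ)⁻¹ * (M * ∑ k ∈ Finset.range n, ‖b ((T ^ k) y)‖) := by gcongr
    _ = M * ((n:ℝ)⁻¹ * ∑ k ∈ Finset.range n, ‖b ((T ^ k) y)‖) := by ring
    _ ≤ M * η := by gcongr

lemma wavg_diff (T : X →L[ℂ] X) (C : ℝ) (hC : ∀ k : ℕ, ‖T ^ k‖ ≤ C) (α β : ℕ → ℂ) (δ : ℝ) (n : ℕ) (y : X)
    (h : (n : ℝ)⁻¹ * ∑ k ∈ Finset.range n, ‖α k - β k‖ ≤ δ) :
    ‖(n : ℝ)⁻¹ • ∑ k ∈ Finset.range n, α k • (T ^ k) y -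
      (n : ℝ)⁻¹ • ∑ k ∈ Finset.range n, β k • (T ^ k) y‖ ≤ δ * (C * ‖y‖) := by
  have hC0 : 0 ≤ C := (norm_nonneg _).trans (hC 0)
  rw [← smul_sub, ← Finset.sum_sub_distrib, norm_smul, Real.norm_of_nonneg (by positivity)]
  calc (n:ℝ)⁻¹ * ‖∑ k ∈ Finset.range n, (α k • (T ^ k) y - β k • (T ^ k) y)‖
      ≤ (n:ℝ)⁻¹ * ∑ k ∈ Finset.range n, ‖α k - β k‖ * (C * ‖y‖) := by
        gcongr
        refine norm_sum_le_of_le _ fun k _ => ?_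
        rw [← sub_smul, norm_smul]
        gcongr
        exact ((T ^ k).le_opNorm y).trans (by gcongr; exact hC k)
    _ = ((n:ℝ)⁻¹ * ∑ k ∈ Finset.range n, ‖α k - β k‖) * (C * ‖y‖) := by rw [← Finset.sum_mul]; ring
    _ ≤ δ * (C * ‖y‖) := by gcongr

lemma wavg_esp (T : X →L[ℂ] X) (β : ℕ → ℂ) (M : ℝ) (hβ : ∀ k, ‖β k‖ ≤ M) (W : Ultrafilter ℕ)
    (e : X) (he : e ∈ Esp T) : ∃ w ∈ Esp T,
      Tendsto (fun n : ℕ => (n : ℝ)⁻¹ • ∑ k ∈ Finset.range n, β k • (T ^ k) e) W (𝓝 w) := by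
  induction he using Submodule.span_induction with
  | mem z hz =>
    have hz' : z ∈ Esp T := Submodule.subset_span hz
    obtain ⟨l, hl, hz⟩ := hz
    obtain ⟨c, hc⟩ := exists_ultralim W _ M
      (fun n => avg_norm_le (fun k => β k * l ^ k) M (fun k => by simpa [hl] using hβ k) n)
    refine ⟨c • z, Submodule.smul_mem _ _ hz', (hc.smul_const z).congr fun n => ?_⟩
    rw [smul_assoc, Finset.sum_smul]
    simp_rw [eigvec_iterate T hz, smul_smul]
  | zero => exact ⟨0, Submodule.zero_mem _, by simp⟩
  | add u v _ _ hu hv =>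
    obtain ⟨w, hw, hw'⟩ := hu
    obtain ⟨w2, hw2, hw2'⟩ := hv
    refine ⟨w + w2, Submodule.add_mem _ hw hw2, (hw'.add hw2').congr fun n => ?_⟩
    simp only [map_add, smul_add, Finset.sum_add_distrib]
  | smul c u _ hu =>
    obtain ⟨w, hw, hw'⟩ := hu
    refine ⟨c • w, Submodule.smul_mem _ _ hw, (hw'.const_smul c).congr fun n => ?_⟩
    simp only [map_smul]
    rw [smul_comm, Finset.smul_sum]
    congr 1
    exact Finset.sum_congr rfl fun k _ => smul_comm _ _ _

lemma ultra_limit [CompleteSpace X] (W : Ultrafilter ℕ) (v : ℕ → X) (E : Set X)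
    (h : ∀ ε > 0, ∃ w ∈ E, ∀ᶠ n in (W : Filter ℕ), dist (v n) w < ε) :
    ∃ y ∈ closure E, Tendsto v W (𝓝 y) := by
  have hc : Cauchy (map v W) := by
    rw [Metric.cauchy_iff]
    refine ⟨inferInstance, fun ε hε => ?_⟩
    obtain ⟨w, -, hw⟩ := h (ε/2) (half_pos hε)
    refine ⟨Metric.ball w (ε/2), hw, fun p hp q hq => ?_⟩
    rw [Metric.mem_ball] at hp hq
    linarith [dist_triangle_right p q w]
  obtain ⟨y, hy⟩ := CompleteSpace.complete hc
  have hy' : Tendsto v W (𝓝 y) := hy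
  refine ⟨y, Metric.mem_closure_iff.2 fun ε hε => ?_, hy'⟩
  obtain ⟨w, hwE, hw⟩ := h (ε/2) (half_pos hε)
  obtain ⟨n, hn, hn'⟩ := (hw.and (Metric.tendsto_nhds.1 hy' (ε/2) (half_pos hε))).exists
  exact ⟨w, hwE, by linarith [dist_triangle_left y w (v n)]⟩

theorem main_sep [CompleteSpace X] [SecondCountableTopology X]
    (T : X →L[ℂ] X) (C : ℝ) (hC : ∀ k : ℕ, ‖T ^ k‖ ≤ C)
    (hT : ∀ x : X, ∀ W : Ultrafilter ℕ, ∃ y : X, ∀ b : StrongDual ℂ X,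
      Tendsto (fun k : ℕ => b ((T ^ k) x)) W (𝓝 (b y)))
    (α : ℕ → ℂ)
    (hH : ∀ l : ℂ, ‖l‖ = 1 → ∃ c : ℂ,
      Tendsto (fun n : ℕ => (n : ℝ)⁻¹ • ∑ k ∈ Finset.range n, α k * l ^ k) atTop (𝓝 c))
    (hα : ∀ δ > 0, ∃ (M : ℝ) (β : ℕ → ℂ), (∀ k, ‖β k‖ ≤ M) ∧
      ∀ n : ℕ, (n : ℝ)⁻¹ * ∑ k ∈ Finset.range n, ‖α k - β k‖ ≤ δ) (x : X) :
    ∃ y, Tendsto (fun n : ℕ => (n : ℝ)⁻¹ • ∑ k ∈ Finset.range n, α k • (T ^ k) x) atTop (𝓝 y) := by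
  have hC0 : 0 ≤ C := (norm_nonneg _).trans (hC 0)
  have step1 : ∀ W : Ultrafilter ℕ, (W : Filter ℕ) ≤ atTop → ∃ y ∈ closure (Esp T : Set X),
      Tendsto (fun n : ℕ => (n : ℝ)⁻¹ • ∑ k ∈ Finset.range n, α k • (T ^ k) x) W (𝓝 y) := by
    intro W hW
    refine ultra_limit W _ _ fun ε hε => ?_
    obtain ⟨M, β, hβ, hαβ⟩ := hα (ε / (4 * (C * ‖x‖ + 1))) (by positivity)
    have hM : 0 ≤ M := (norm_nonneg _).trans (hβ 0)
    set η := ε / (4 * (M + 1)) with hη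
    have hη0 : 0 < η := by positivity
    obtain ⟨e, he, -, heL⟩ := lemmaL T C hC x (hT x) (η ^ 2 / 2) (by positivity)
    have hun := uniformize T C hC (x - e) (η ^ 2 / 2) (by positivity) heL
    obtain ⟨w, hw, hw'⟩ := wavg_esp T β M hβ W e he
    refine ⟨w, hw, ?_⟩
    filter_upwards [hW hun, Metric.tendsto_nhds.1 hw' (ε/4) (by positivity)] with n hn hn'
    have h1 := wavg_diff T C hC α β _ n x (hαβ n)
    have h2 := wavg_small T β M hβ (x - e) η hη0.le n (fun b hb => by
      have := hn b hb; linarith)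
    have h3 : (n : ℝ)⁻¹ • ∑ k ∈ Finset.range n, β k • (T ^ k) (x - e) =
        (n : ℝ)⁻¹ • ∑ k ∈ Finset.range n, β k • (T ^ k) x - (n : ℝ)⁻¹ • ∑ k ∈ Finset.range n, β k • (T ^ k) e := by
      simp only [map_sub, smul_sub, Finset.sum_sub_distrib]
    rw [h3] at h2
    have h4 : ε / (4 * (C * ‖x‖ + 1)) * (C * ‖x‖) ≤ ε / 4 := by
      rw [div_mul_eq_mul_div, div_le_div_iff₀ (by positivity) (by positivity)]
      nlinarith
    have h5 : M * η ≤ ε / 4 := by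
      rw [hη, mul_div_assoc', div_le_div_iff₀ (by positivity) (by positivity)]
      nlinarith
    rw [← dist_eq_norm] at h1 h2
    have h6 := dist_triangle4 ((n : ℝ)⁻¹ • ∑ k ∈ Finset.range n, α k • (T ^ k) x)
      ((n : ℝ)⁻¹ • ∑ k ∈ Finset.range n, β k • (T ^ k) x) ((n : ℝ)⁻¹ • ∑ k ∈ Finset.range n, β k • (T ^ k) e) w
    linarith
  have step2 : ∀ (W W' : Ultrafilter ℕ), (W : Filter ℕ) ≤ atTop → (W' : Filter ℕ) ≤ atTop →
      ∀ y y' : X, y ∈ closure (Esp T : Set X) → y' ∈ closure (Esp T : Set X) →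
      Tendsto (fun n : ℕ => (n : ℝ)⁻¹ • ∑ k ∈ Finset.range n, α k • (T ^ k) x) W (𝓝 y) →
      Tendsto (fun n : ℕ => (n : ℝ)⁻¹ • ∑ k ∈ Finset.range n, α k • (T ^ k) x) W' (𝓝 y') → y = y' := by
    intro W W' hW hW' y y' hy hy' hl hl'
    refine sub_eq_zero.1 (eq_zero_of_eig T C hC (y - y') (hT _) ?_ ?_)
    · exact (Esp T).topologicalClosure.sub_mem hy hy'
    · intro l f hlu hf
      obtain ⟨c, hc⟩ := hH l hlu
      have h1 : Tendsto (fun n : ℕ => f ((n : ℝ)⁻¹ • ∑ k ∈ Finset.range n, α k • (T ^ k) x)) atTop (𝓝 (c * f x)) := by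
        refine (hc.mul_const (f x)).congr fun n => ?_
        rw [ContinuousLinearMap.map_smul_of_tower, map_sum, smul_mul_assoc, Finset.sum_mul]
        congr 1
        refine Finset.sum_congr rfl fun k _ => ?_
        rw [map_smul, eigfun_iterate T f l hf, smul_eq_mul, mul_assoc]
      have h2 := tendsto_nhds_unique ((f.continuous.tendsto _).comp hl) (h1.mono_left hW)
      have h3 := tendsto_nhds_unique ((f.continuous.tendsto _).comp hl') (h1.mono_left hW')
      rw [map_sub, h2, h3, sub_self]
  obtain ⟨y, hy, hly⟩ := step1 (hyperfilter ℕ) Nat.hyperfilter_le_atTop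
  refine ⟨y, tendsto_iff_ultrafilter _ _ _ |>.2 fun W hW => ?_⟩
  obtain ⟨y', hy', hly'⟩ := step1 W hW
  rw [step2 _ W Nat.hyperfilter_le_atTop hW y y' hy hy' hly hly']
  exact hly'

end
end WAPH

namespace WAPH
open Filter Topology MeasureTheory

section
variable {X : Type*} [NormedAddCommGroup X] [NormedSpace ℂ X]

lemma weak_cont (b : StrongDual ℂ X) : Continuous (fun z : WeakSpace ℂ X => b ((toWeakSpace ℂ X).symm z)) :=
  WeakBilin.eval_continuous (topDualPairing ℂ X).flip b

lemma wap_ultra (T : X →L[ℂ] X) (x : X)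
    (h : IsCompact (closure (Set.range fun n : ℕ => toWeakSpace ℂ X ((T ^ n) x)))) (W : Ultrafilter ℕ) :
    ∃ y, ∀ b : StrongDual ℂ X, Tendsto (fun k : ℕ => b ((T ^ k) x)) W (𝓝 (b y)) := by
  obtain ⟨z, -, hz⟩ := h.ultrafilter_le_nhds (W.map fun n : ℕ => toWeakSpace ℂ X ((T ^ n) x)) (by
    rw [le_principal_iff]
    exact Ultrafilter.mem_map.2 (Filter.univ_mem' fun n => subset_closure ⟨n, rfl⟩))
  refine ⟨(toWeakSpace ℂ X).symm z, fun b => ?_⟩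
  have h1 : Tendsto (fun n : ℕ => toWeakSpace ℂ X ((T ^ n) x)) W (𝓝 z) := hz
  exact ((weak_cont b).tendsto z).comp h1

lemma power_bdd [CompleteSpace X] (T : X →L[ℂ] X)
    (h : ∀ x, IsCompact (closure (Set.range fun n : ℕ => toWeakSpace ℂ X ((T ^ n) x)))) :
    ∃ C : ℝ, ∀ k : ℕ, ‖T ^ k‖ ≤ C := by
  apply banach_steinhaus (g := fun k : ℕ => T ^ k)
  intro x
  have h1 : ∀ b : StrongDual ℂ X, ∃ C, ∀ k : ℕ,
      ‖NormedSpace.inclusionInDoubleDual ℂ X ((T ^ k) x) b‖ ≤ C := by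
    intro b
    obtain ⟨C, hC⟩ := (h x).exists_bound_of_continuousOn (weak_cont b).continuousOn
    exact ⟨C, fun k => hC _ (subset_closure ⟨k, rfl⟩)⟩
  obtain ⟨C, hC⟩ := banach_steinhaus h1
  refine ⟨C, fun k => ?_⟩
  have := (NormedSpace.inclusionInDoubleDualLi ℂ (E := X)).norm_map ((T ^ k) x)
  rw [← this]
  exact hC k

lemma mem_of_dual (S : Submodule ℂ X) (hS : IsClosed (S : Set X)) (y : X)
    (h : ∀ b : StrongDual ℂ X, (∀ s ∈ S, b s = 0) → b y = 0) : y ∈ S := by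
  by_contra hy
  have := hS
  have hne : S.mkQL y ≠ 0 := by
    intro h0
    exact hy ((Submodule.Quotient.mk_eq_zero S).1 h0)
  obtain ⟨g, hg1, hg⟩ := exists_dual_vector ℂ (S.mkQL y) (norm_ne_zero_iff.2 hne)
  have := h (g.comp S.mkQL) (fun s hs => by
    have : S.mkQL s = 0 := (Submodule.Quotient.mk_eq_zero S).2 hs
    rw [ContinuousLinearMap.comp_apply, this, map_zero])
  rw [ContinuousLinearMap.comp_apply, hg] at this
  exact hne (norm_eq_zero.1 (Complex.ofReal_eq_zero.1 this))

theorem main_gen [CompleteSpace X]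
  (T : X →L[ℂ] X)
  (hT : ∀ x, IsCompact (closure (Set.range fun n : ℕ => toWeakSpace ℂ X ((T ^ n) x))))
  (α : ℕ → ℂ)
  (hH : ∀ l : ℂ, ‖l‖ = 1 → ∃ c, Tendsto (fun n : ℕ => (n : ℝ)⁻¹ • ∑ k ∈ Finset.range n, α k * l ^ k) atTop (𝓝 c))
  (hα : ∀ δ > 0, ∃ (M : ℝ) (β : ℕ → ℂ), (∀ k, ‖β k‖ ≤ M) ∧ ∀ n : ℕ, (n : ℝ)⁻¹ * ∑ k ∈ Finset.range n, ‖α k - β k‖ ≤ δ) (x : X) :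
  ∃ y, Tendsto (fun n : ℕ => (n : ℝ)⁻¹ • ∑ k ∈ Finset.range n, α k • (T ^ k) x) atTop (𝓝 y) := by
  obtain ⟨C, hC⟩ := power_bdd T hT
  have hC0 : 0 ≤ C := (norm_nonneg _).trans (hC 0)
  set S0 : Submodule ℂ X := Submodule.span ℂ (Set.range fun k : ℕ => (T ^ k) x) with hS0
  set S : Submodule ℂ X := S0.topologicalClosure with hS
  have hcl : IsClosed (S : Set X) := S0.isClosed_topologicalClosure
  have : CompleteSpace S := hcl.completeSpace_coe
  have : SecondCountableTopology S := by
    have : TopologicalSpace.IsSeparable (S : Set X) :=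
      ((Set.countable_range _).isSeparable.span (R := ℂ)).closure
    exact this.secondCountableTopology
  have hTS0 : ∀ y ∈ S0, T y ∈ S0 := by
    intro y hy
    have : S0 ≤ S0.comap (T : X →ₗ[ℂ] X) := by
      rw [hS0, Submodule.span_le]
      rintro _ ⟨k, rfl⟩
      refine Submodule.subset_span ⟨k + 1, ?_⟩
      show (T ^ (k + 1)) x = T ((T ^ k) x)
      rw [pow_succ']
      rfl
    exact this hy
  have hTS : ∀ y ∈ S, T y ∈ S := by
    intro y hy
    exact map_mem_closure T.continuous hy hTS0
  set T0 : S →L[ℂ] S := T.restrict hTS with hT0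
  have hpow : ∀ (k : ℕ) (y : S), (((T0 ^ k) y : S) : X) = (T ^ k) (y : X) := by
    intro k
    induction k with
    | zero => intro y; rfl
    | succ k ih =>
      intro y
      rw [pow_succ, pow_succ]
      exact ih (T0 y)
  have hC' : ∀ k : ℕ, ‖T0 ^ k‖ ≤ C := fun k => by
    refine ContinuousLinearMap.opNorm_le_bound _ hC0 fun y => ?_
    rw [Submodule.coe_norm, hpow]
    exact ((T ^ k).le_opNorm _).trans (mul_le_mul_of_nonneg_right (hC k) (norm_nonneg _))
  have hT' : ∀ x : S, ∀ W : Ultrafilter ℕ, ∃ y, ∀ b : StrongDual ℂ S,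
      Tendsto (fun k : ℕ => b ((T0 ^ k) x)) W (𝓝 (b y)) := by
    intro z W
    obtain ⟨y, hy⟩ := wap_ultra T (z : X) (hT _) W
    have hyS : y ∈ S := by
      refine mem_of_dual S hcl y fun b hb => ?_
      refine tendsto_nhds_unique (hy b) (tendsto_const_nhds.congr fun k => ?_)
      rw [← hpow]
      exact (hb _ (Subtype.coe_prop _)).symm
    refine ⟨⟨y, hyS⟩, fun b => ?_⟩
    obtain ⟨g, hg, -⟩ := exists_extension_norm_eq S b
    rw [← hg]
    refine (hy g).congr fun k => ?_
    rw [← hpow, hg]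
  have hxS : x ∈ S := S0.le_topologicalClosure (Submodule.subset_span ⟨0, rfl⟩)
  obtain ⟨y, hy⟩ := main_sep T0 C hC' hT' α hH hα ⟨x, hxS⟩
  refine ⟨y, ((continuous_subtype_val.tendsto y).comp hy).congr fun n => ?_⟩
  have e : ∀ v : S, (((n:ℝ)⁻¹ • v : S) : X) = (n:ℝ)⁻¹ • (v : X) := fun v => rfl
  rw [Function.comp_apply, e, Submodule.coe_sum]
  congr 1
  refine Finset.sum_congr rfl fun k _ => ?_
  rw [Submodule.coe_smul, hpow]

lemma sum_shift {E : Type*} [AddCommMonoid E] (f : ℕ → E) (n : ℕ) :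
    ∑ k ∈ Finset.Icc 1 n, f k = ∑ k ∈ Finset.range n, f (k + 1) := by
  rw [Finset.range_eq_Ico, Finset.sum_Ico_add' f 0 n 1]
  rfl

lemma trunc (α : ℕ → ℂ) (φ : ℝ → ℝ) (hφ_pos : ∀ t, 0 ≤ t → 0 ≤ φ t)
    (hφ_mono : StrictMonoOn φ (Set.Ici (0 : ℝ)))
    (hφ_top : Tendsto φ atTop atTop) (s : ℝ)
    (ha : ∀ n : ℕ, (n : ℝ)⁻¹ * ∑ k ∈ Finset.range n, ‖α k‖ * φ ‖α k‖ ≤ s) :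
    ∀ δ > 0, ∃ (M : ℝ) (β : ℕ → ℂ), (∀ k, ‖β k‖ ≤ M) ∧ ∀ n : ℕ, (n : ℝ)⁻¹ * ∑ k ∈ Finset.range n, ‖α k - β k‖ ≤ δ := by
  intro δ hδ
  have hs : 0 ≤ s := by simpa using ha 0
  obtain ⟨M, hM0, hM⟩ := ((eventually_ge_atTop (0:ℝ)).and (hφ_top.eventually_ge_atTop (s / δ + 1))).exists
  have hφM : 0 < φ M := lt_of_lt_of_le (by positivity) hM
  refine ⟨M, fun k => if ‖α k‖ ≤ M then α k else 0, fun k => ?_, fun n => ?_⟩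
  · show ‖if ‖α k‖ ≤ M then α k else 0‖ ≤ M
    split_ifs with h
    · exact h
    · simpa using hM0
  · have key : ∀ k, ‖α k - if ‖α k‖ ≤ M then α k else 0‖ ≤ (φ M)⁻¹ * (‖α k‖ * φ ‖α k‖) := by
      intro k
      have := hφ_pos ‖α k‖ (norm_nonneg _)
      split_ifs with h
      · rw [sub_self, norm_zero]; positivity
      · have h2 : φ M ≤ φ ‖α k‖ :=
          hφ_mono.monotoneOn hM0 (norm_nonneg _) (not_le.1 h).le
        rw [sub_zero, inv_mul_eq_div, le_div_iff₀ hφM]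
        gcongr
    calc (n : ℝ)⁻¹ * ∑ k ∈ Finset.range n, ‖α k - if ‖α k‖ ≤ M then α k else 0‖
        ≤ (n : ℝ)⁻¹ * ∑ k ∈ Finset.range n, (φ M)⁻¹ * (‖α k‖ * φ ‖α k‖) := by
          gcongr with k _
          exact key k
      _ = (φ M)⁻¹ * ((n : ℝ)⁻¹ * ∑ k ∈ Finset.range n, ‖α k‖ * φ ‖α k‖) := by
          rw [← Finset.mul_sum]; ring
      _ ≤ (φ M)⁻¹ * s := by gcongr; exact ha n
      _ ≤ δ := by
          rw [inv_mul_eq_div, div_le_iff₀ hφM]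
          have : s / δ ≤ φ M := by linarith
          rw [div_le_iff₀ hδ] at this
          linarith

theorem final (a : ℕ → ℂ)
    (hHartman : ∀ l : ℂ, ‖l‖ = 1 → ∃ c : ℂ,
      Tendsto (fun n : ℕ => (n : ℂ)⁻¹ * ∑ k ∈ Finset.Icc 1 n, a k * (starRingEnd ℂ l) ^ k)
        atTop (nhds c))
    (φ : ℝ → ℝ) (hφ_pos : ∀ t, 0 ≤ t → 0 ≤ φ t)
    (hφ_mono : StrictMonoOn φ (Set.Ici (0 : ℝ)))
    (hφ_top : Tendsto φ atTop atTop)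
    (ha : ∃ s : ℝ, ∀ n : ℕ, (n : ℝ)⁻¹ * ∑ k ∈ Finset.Icc 1 n, ‖a k‖ * φ ‖a k‖ ≤ s)
    [CompleteSpace X]
    (T : X →L[ℂ] X)
    (hWAP : ∀ x : X,
      IsCompact (closure (Set.range fun n : ℕ => toWeakSpace ℂ X ((T ^ n) x))))
    (x : X) :
    ∃ y : X, Tendsto (fun n : ℕ => (n : ℂ)⁻¹ • ∑ k ∈ Finset.Icc 1 n, a k • (T ^ k) x)
      atTop (nhds y) := by
  obtain ⟨s, hs⟩ := ha
  obtain ⟨y, hy⟩ := main_gen T hWAP (fun k => a (k + 1)) (by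
    intro l hl
    obtain ⟨c, hc⟩ := hHartman (starRingEnd ℂ l) (by rw [RCLike.norm_conj]; exact hl)
    have hl0 : l ≠ 0 := by intro h; rw [h, norm_zero] at hl; exact zero_ne_one hl
    refine ⟨c * l⁻¹, (hc.mul_const l⁻¹).congr fun n => ?_⟩
    rw [sum_shift, Complex.conj_conj, mul_assoc, Finset.sum_mul, Complex.real_smul, Complex.ofReal_inv,
      Complex.ofReal_natCast]
    congr 1
    refine Finset.sum_congr rfl fun k _ => ?_
    rw [pow_succ]
    field_simp)
    (trunc _ φ hφ_pos hφ_mono hφ_top s fun n => by rw [← sum_shift (fun k => ‖a k‖ * φ ‖a k‖)]; exact hs n) (T x)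
  refine ⟨y, hy.congr fun n => ?_⟩
  rw [sum_shift, ← Complex.coe_smul, Complex.ofReal_inv, Complex.ofReal_natCast]
  congr 1

end
end WAPH


open Filter Finset

/-- Let `(a_k)` be a Hartman sequence (i.e. `lim_n (1/n) ∑_{k=1}^n a_k λ̄^k`
exists for every unimodular `λ`) satisfying `sup_n (1/n) ∑_{k=1}^n |a_k| φ(|a_k|) < ∞` for some
strictly increasing `φ : ℝ⁺ → ℝ⁺` with `φ(x) → ∞`. Then for every weakly almost periodic
operator `T` on a complex Banach space `X` and every `x ∈ X`, the averages
`(1/n) ∑_{k=1}^n a_k T^k x` converge in norm. -/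
theorem stmt2 (a : ℕ → ℂ)
    (hHartman : ∀ l : ℂ, ‖l‖ = 1 → ∃ c : ℂ,
      Tendsto (fun n : ℕ => (n : ℂ)⁻¹ * ∑ k ∈ Icc 1 n, a k * (starRingEnd ℂ l) ^ k)
        atTop (nhds c))
    (φ : ℝ → ℝ) (hφ_pos : ∀ t, 0 ≤ t → 0 ≤ φ t)
    (hφ_mono : StrictMonoOn φ (Set.Ici (0 : ℝ)))
    (hφ_top : Tendsto φ atTop atTop)
    (ha : ∃ s : ℝ, ∀ n : ℕ, (n : ℝ)⁻¹ * ∑ k ∈ Icc 1 n, ‖a k‖ * φ ‖a k‖ ≤ s)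
    {X : Type*} [NormedAddCommGroup X] [NormedSpace ℂ X] [CompleteSpace X]
    (T : X →L[ℂ] X)
    (hWAP : ∀ x : X,
      IsCompact (closure (Set.range fun n : ℕ => toWeakSpace ℂ X ((T ^ n) x))))
    (x : X) :
    ∃ y : X, Tendsto (fun n : ℕ => (n : ℂ)⁻¹ • ∑ k ∈ Icc 1 n, a k • (T ^ k) x)
      atTop (nhds y) := by
  exact WAPH.final a hHartman φ hφ_pos hφ_mono hφ_top ha T hWAP x
end

section
/- Let (a_k)_{k≥1} be a sequence of scalars. Then the following are equivalent: (a) sup_n (1/n)∑_{k=1}^n |a_k| < ∞; (b) for every bounded linear operator T on a (real or complex) Banach space X and every x ∈ X with T^n x → 0 weakly, the averages (1/n)∑_{k=1}^n a_k T^k x converge to 0 weakly; (c) for every bounded linear operator T on a (real or complex) Banach space X and every x ∈ X with ‖T^n x‖ → 0, the averages (1/n)∑_{k=1}^n a_k T^k x converge to 0 in norm. -/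
open Filter Finset

universe u

theorem avg_tendsto {𝕜 : Type*} [RCLike 𝕜] (a : ℕ → 𝕜) {E : Type*} [NormedAddCommGroup E]
    [NormedSpace 𝕜 E] (s : ℝ) (hs : ∀ n : ℕ, (n : ℝ)⁻¹ * ∑ k ∈ Icc 1 n, ‖a k‖ ≤ s)
    (v : ℕ → E) (hv : Tendsto v atTop (nhds 0)) :
    Tendsto (fun n : ℕ => (n : 𝕜)⁻¹ • ∑ k ∈ Icc 1 n, a k • v k) atTop (nhds 0) := by
  have hs0 : 0 ≤ s := by simpa using hs 0
  rw [Metric.tendsto_atTop]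
  intro ε hε
  have hδ : 0 < ε / (2 * (s + 1)) := by positivity
  set δ := ε / (2 * (s + 1)) with hδd
  obtain ⟨N, hN⟩ := (Metric.tendsto_atTop.1 hv) δ hδ
  set C := ∑ k ∈ range N, ‖a k‖ * ‖v k‖ with hC
  have hC0 : 0 ≤ C := sum_nonneg fun i _ => by positivity
  have hlim : Tendsto (fun n : ℕ => (n : ℝ)⁻¹ * C) atTop (nhds 0) := by
    simpa using (tendsto_inv_atTop_nhds_zero_nat (𝕜 := ℝ)).mul_const C
  obtain ⟨M, hM⟩ := (Metric.tendsto_atTop.1 hlim) (ε / 2) (by positivity)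
  refine ⟨M, fun n hn => ?_⟩
  have h1 := hM n hn
  rw [Real.dist_eq, sub_zero] at h1
  have h1 := (le_abs_self _).trans_lt h1
  rw [dist_zero_right, norm_smul, norm_inv, RCLike.norm_natCast]
  have h2 : ‖∑ k ∈ Icc 1 n, a k • v k‖ ≤ C + δ * ∑ k ∈ Icc 1 n, ‖a k‖ := by
    refine (norm_sum_le _ _).trans ?_
    have : ∀ k ∈ Icc 1 n, ‖a k • v k‖ ≤
        (if k < N then ‖a k‖ * ‖v k‖ else 0) + δ * ‖a k‖ := by
      intro k _
      rw [norm_smul]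
      split_ifs with h
      · have : 0 ≤ δ * ‖a k‖ := by positivity
        linarith
      · have := hN k (not_lt.1 h)
        rw [dist_zero_right] at this
        rw [zero_add, mul_comm]
        gcongr
    refine (sum_le_sum this).trans ?_
    rw [sum_add_distrib, ← mul_sum, ← sum_filter]
    gcongr
    refine sum_le_sum_of_subset_of_nonneg ?_ fun i _ _ => by positivity
    intro k hk
    simpa using (mem_filter.1 hk).2
  have h3 : δ * s < ε / 2 := by
    rw [hδd, div_mul_eq_mul_div, div_lt_div_iff₀ (by positivity) (by positivity)]
    nlinarith
  calc (n : ℝ)⁻¹ * ‖∑ k ∈ Icc 1 n, a k • v k‖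
      ≤ (n : ℝ)⁻¹ * (C + δ * ∑ k ∈ Icc 1 n, ‖a k‖) := by gcongr
    _ = (n : ℝ)⁻¹ * C + δ * ((n : ℝ)⁻¹ * ∑ k ∈ Icc 1 n, ‖a k‖) := by ring
    _ ≤ (n : ℝ)⁻¹ * C + δ * s := by gcongr; exact hs n
    _ < ε := by linarith

theorem scalar_bdd {𝕜 : Type*} [RCLike 𝕜] (a : ℕ → 𝕜)
    (h : ∀ c : ℕ → 𝕜, Tendsto c atTop (nhds 0) →
      Tendsto (fun n : ℕ => (n : 𝕜)⁻¹ * ∑ k ∈ Icc 1 n, a k * c k) atTop (nhds 0)) :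
    ∃ s : ℝ, ∀ n : ℕ, (n : ℝ)⁻¹ * ∑ k ∈ Icc 1 n, ‖a k‖ ≤ s := by
  by_contra! hcon
  set A : ℕ → ℝ := fun n => (n : ℝ)⁻¹ * ∑ k ∈ Icc 1 n, ‖a k‖ with hA
  have hcon : ∀ s, ∃ n, s < A n := hcon
  -- running maximum
  set M : ℕ → ℝ := fun n => (partialSups A n) ⊔ 1 with hM
  have hMmono : Monotone M := fun i j hij => sup_le_sup_right ((partialSups A).mono hij) 1
  have hM1 : ∀ n, 1 ≤ M n := fun n => le_sup_right
  have hAM : ∀ n, A n ≤ M n := fun n => (le_partialSups A n).trans le_sup_left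
  have hMtop : Tendsto M atTop atTop := by
    refine tendsto_atTop_atTop_of_monotone hMmono fun b => ?_
    obtain ⟨n, hn⟩ := hcon b
    exact ⟨n, hn.le.trans (hAM n)⟩
  have hrec : ∀ N, ∃ n ≥ N, M n = A n := by
    intro N
    obtain ⟨m, hm⟩ := hcon (M N)
    classical
    have hex : ∃ m, M N < A m := ⟨m, hm⟩
    have hf := Nat.find_spec hex
    have hmin : ∀ j < Nat.find hex, A j ≤ M N := fun j hj => not_lt.1 (Nat.find_min hex hj)
    set n := Nat.find hex
    refine ⟨n, ?_, le_antisymm ?_ (hAM n)⟩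
    · by_contra! hlt
      exact absurd ((hAM n).trans (hMmono hlt.le)) (not_le.2 hf)
    · refine sup_le (partialSups_le _ _ _ fun j hj => ?_) ((hM1 N).trans hf.le)
      rcases hj.lt_or_eq with hj | hj
      · exact (hmin j hj).trans hf.le
      · rw [hj]
  set c : ℕ → 𝕜 := fun k => ((M k)⁻¹ : ℝ) * ((starRingEnd 𝕜) (a k) * ((‖a k‖⁻¹ : ℝ) : 𝕜)) with hc
  have hac : ∀ k, a k * c k = ((M k)⁻¹ * ‖a k‖ : ℝ) := by
    intro k
    simp only [hc]
    rw [mul_left_comm, ← mul_assoc (a k), RCLike.mul_conj]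
    norm_cast
    by_cases h0 : ‖a k‖ = 0
    · simp [h0]
    · congr 2; field_simp
  have hcn : ∀ k, ‖c k‖ ≤ (M k)⁻¹ := by
    intro k
    have : 0 < M k := zero_lt_one.trans_le (hM1 k)
    simp only [hc, norm_mul, RCLike.norm_ofReal, RCLike.norm_conj]
    rw [abs_of_pos (inv_pos.2 this), abs_of_nonneg (by positivity)]
    refine mul_le_of_le_one_right (inv_pos.2 this).le ?_
    exact mul_inv_le_one
  have hlim := h c (squeeze_zero_norm hcn (tendsto_inv_atTop_zero.comp hMtop))
  obtain ⟨N, hN⟩ := (Metric.tendsto_atTop.1 hlim) 1 one_pos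
  obtain ⟨n, hn, hMA⟩ := hrec N
  have h1 := hN n hn
  simp only [hac] at h1
  rw [dist_zero_right, ← RCLike.ofReal_sum, norm_mul, norm_inv, RCLike.norm_natCast,
    RCLike.norm_ofReal] at h1
  refine absurd h1 (not_lt.2 ?_)
  have hpos : 0 < M n := zero_lt_one.trans_le (hM1 n)
  calc (1 : ℝ) = (M n)⁻¹ * A n := by rw [← hMA]; field_simp
    _ = (n : ℝ)⁻¹ * ∑ k ∈ Icc 1 n, (M n)⁻¹ * ‖a k‖ := by rw [← mul_sum, hA]; ring
    _ ≤ (n : ℝ)⁻¹ * ∑ k ∈ Icc 1 n, (M k)⁻¹ * ‖a k‖ := by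
        gcongr with k hk
        exact hMmono (mem_Icc.1 hk).2
    _ ≤ _ := by gcongr; exact le_abs_self _

theorem exists_line_aux (𝕜 : Type*) [RCLike 𝕜] (E : Type u) [AddCommGroup E] [Module 𝕜 E]
    (e : E ≃ₗ[𝕜] 𝕜) :
    ∃ (E : Type u) (_ : NormedAddCommGroup E) (_ : NormedSpace 𝕜 E) (_ : CompleteSpace E)
      (v : E) (g : E →L[𝕜] 𝕜), ‖v‖ = 1 ∧ g v = 1 := by
  let i1 : NormedAddCommGroup E :=
    NormedAddCommGroup.induced _ 𝕜 e.toLinearMap e.injective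
  let i2 : NormedSpace 𝕜 E := NormedSpace.induced 𝕜 E 𝕜 e.toLinearMap
  have hn : ∀ x, ‖e x‖ = ‖x‖ := fun x => rfl
  have : FiniteDimensional 𝕜 E := e.symm.finiteDimensional
  refine ⟨E, i1, i2, FiniteDimensional.complete 𝕜 _, e.symm 1,
    e.toLinearMap.mkContinuous 1 (fun x => by simp [hn]), ?_, ?_⟩
  · rw [← hn]; simp
  · simp

theorem exists_line (𝕜 : Type*) [RCLike 𝕜] :
    ∃ (E : Type u) (_ : NormedAddCommGroup E) (_ : NormedSpace 𝕜 E) (_ : CompleteSpace E)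
      (v : E) (g : E →L[𝕜] 𝕜), ‖v‖ = 1 ∧ g v = 1 := by
  have : Small.{u} 𝕜 := by
    refine small_of_injective (β := ℝ × ℝ) (f := fun z : 𝕜 => (RCLike.re z, RCLike.im z)) ?_
    intro z w hzw
    exact RCLike.ext (congrArg Prod.fst hzw) (congrArg Prod.snd hzw)
  exact exists_line_aux 𝕜 (Shrink.{u} 𝕜) (Shrink.linearEquiv 𝕜 𝕜)

open BoundedContinuousFunction in
theorem back {𝕜 : Type*} [RCLike 𝕜] (a : ℕ → 𝕜)
    (h : ∀ (X : Type u) (_ : NormedAddCommGroup X) (_ : NormedSpace 𝕜 X) (_ : CompleteSpace X)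
        (T : X →L[𝕜] X) (x : X),
        Tendsto (fun n : ℕ => ‖(T ^ n) x‖) atTop (nhds 0) →
        ∀ f : X →L[𝕜] 𝕜,
          Tendsto (fun n : ℕ => f ((n : 𝕜)⁻¹ • ∑ k ∈ Icc 1 n, a k • (T ^ k) x))
            atTop (nhds 0)) :
    ∃ s : ℝ, ∀ n : ℕ, (n : ℝ)⁻¹ * ∑ k ∈ Icc 1 n, ‖a k‖ ≤ s := by
  refine scalar_bdd a fun c hc => ?_
  obtain ⟨E, _, _, _, v, g, hv, hg⟩ := exists_line.{u} 𝕜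
  obtain ⟨K, hK⟩ := (Metric.isBounded_range_of_tendsto c hc).exists_norm_le
  let S : (ℕ →ᵇ E) →ₗ[𝕜] (ℕ →ᵇ E) :=
    { toFun := fun f => f.compContinuous ⟨Nat.succ, continuous_of_discreteTopology⟩
      map_add' := fun f g => by ext; rfl
      map_smul' := fun r f => by ext; rfl }
  let T : (ℕ →ᵇ E) →L[𝕜] (ℕ →ᵇ E) := S.mkContinuous 1 (fun f => by
    rw [one_mul, BoundedContinuousFunction.norm_le (norm_nonneg _)]
    exact fun x => f.norm_coe_le_norm _)
  have hT : ∀ f n, T f n = f (n + 1) := fun f n => rfl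
  have hTk : ∀ k f n, (T ^ k) f n = f (n + k) := by
    intro k
    induction k with
    | zero => intro f n; rfl
    | succ k ih =>
      intro f n
      rw [pow_succ, mul_apply_eq_comp, ih, hT]
      rfl
  let x : ℕ →ᵇ E := BoundedContinuousFunction.ofNormedAddCommGroup (fun n => c n • v)
    continuous_of_discreteTopology K (fun n => by
      rw [norm_smul, hv, mul_one]; exact hK _ ⟨n, rfl⟩)
  have hx : ∀ n, x n = c n • v := fun n => rfl
  let f : (ℕ →ᵇ E) →L[𝕜] 𝕜 := g.comp (BoundedContinuousFunction.evalCLM 𝕜 0)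
  have hf : ∀ y, f y = g (y 0) := fun y => rfl
  have key := h (ℕ →ᵇ E) inferInstance inferInstance inferInstance T x ?_ f
  · refine key.congr fun n => ?_
    rw [map_smul, map_sum, smul_eq_mul]
    congr 1
    refine sum_congr rfl fun k _ => ?_
    rw [map_smul, hf, hTk, hx, map_smul, hg]
    simp
  · rw [Metric.tendsto_atTop]
    intro ε hε
    obtain ⟨N, hN⟩ := (Metric.tendsto_atTop.1 hc) (ε / 2) (by positivity)
    refine ⟨N, fun n hn => ?_⟩
    rw [dist_zero_right, norm_norm]
    refine lt_of_le_of_lt (b := ε / 2) ?_ (by linarith)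
    rw [BoundedContinuousFunction.norm_le (by positivity)]
    intro m
    rw [hTk, hx, norm_smul, hv, mul_one]
    have := hN (m + n) (by omega)
    rw [dist_zero_right] at this
    exact this.le

/-- For a sequence of scalars `(a_k)`, the following are equivalent:
(a) `sup_n (1/n) ∑_{k=1}^n |a_k| < ∞`;
(b) for every bounded operator `T` on a Banach space `X` and every `x` with `T^n x → 0` weakly,
`(1/n) ∑_{k=1}^n a_k T^k x → 0` weakly;
(c) for every bounded operator `T` on a Banach space `X` and every `x` with `‖T^n x‖ → 0`,
`(1/n) ∑_{k=1}^n a_k T^k x → 0` in norm. -/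
theorem stmt4 {𝕜 : Type*} [RCLike 𝕜] (a : ℕ → 𝕜) :
    ((∃ s : ℝ, ∀ n : ℕ, (n : ℝ)⁻¹ * ∑ k ∈ Icc 1 n, ‖a k‖ ≤ s) ↔
      (∀ (X : Type u) (_ : NormedAddCommGroup X) (_ : NormedSpace 𝕜 X) (_ : CompleteSpace X)
        (T : X →L[𝕜] X) (x : X),
        (∀ f : X →L[𝕜] 𝕜, Tendsto (fun n : ℕ => f ((T ^ n) x)) atTop (nhds 0)) →
        ∀ f : X →L[𝕜] 𝕜,
          Tendsto (fun n : ℕ => f ((n : 𝕜)⁻¹ • ∑ k ∈ Icc 1 n, a k • (T ^ k) x))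
            atTop (nhds 0))) ∧
    ((∃ s : ℝ, ∀ n : ℕ, (n : ℝ)⁻¹ * ∑ k ∈ Icc 1 n, ‖a k‖ ≤ s) ↔
      (∀ (X : Type u) (_ : NormedAddCommGroup X) (_ : NormedSpace 𝕜 X) (_ : CompleteSpace X)
        (T : X →L[𝕜] X) (x : X),
        Tendsto (fun n : ℕ => ‖(T ^ n) x‖) atTop (nhds 0) →
        Tendsto (fun n : ℕ => (n : 𝕜)⁻¹ • ∑ k ∈ Icc 1 n, a k • (T ^ k) x)
          atTop (nhds 0))) := by
  refine ⟨⟨?_, ?_⟩, ⟨?_, ?_⟩⟩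
  · rintro ⟨s, hs⟩ X _ _ _ T x hx f
    refine (avg_tendsto a s hs _ (hx f)).congr fun n => ?_
    simp [map_sum]
  · intro h
    refine back.{u} a fun X i1 i2 i3 T x hx f => h X i1 i2 i3 T x (fun g => ?_) f
    have := (g.continuous.tendsto 0).comp (tendsto_zero_iff_norm_tendsto_zero.2 hx)
    simpa [Function.comp_def] using this
  · rintro ⟨s, hs⟩ X _ _ _ T x hx
    exact avg_tendsto a s hs _ (tendsto_zero_iff_norm_tendsto_zero.2 hx)
  · intro h
    refine back.{u} a fun X i1 i2 i3 T x hx f => ?_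
    have := (f.continuous.tendsto 0).comp (h X i1 i2 i3 T x hx)
    rw [map_zero] at this
    exact this
end

section
/- Let (a_k)_{k≥1} be a sequence of scalars satisfying sup_n (1/n)∑_{k=1}^n |a_k| < ∞ and |a_k| = o(k). Then for every contraction T on a (real or complex) Hilbert space H and every x ∈ H with T^n x → 0 weakly, one has lim_n ‖(1/n)∑_{k=1}^n a_k T^k x‖ = 0. -/
open Filter Finset


lemma aux_contr {𝕜 : Type*} [RCLike 𝕜] {H : Type*} [NormedAddCommGroup H]
    [InnerProductSpace 𝕜 H] [CompleteSpace H] (S : H →L[𝕜] H) (hS : ‖S‖ ≤ 1) (u v : H) (e : ℝ)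
    (he : 0 ≤ e) (h : ‖u‖ ^ 2 - ‖S u‖ ^ 2 ≤ e ^ 2) :
    ‖(inner 𝕜 v u : 𝕜) - inner 𝕜 (S v) (S u)‖ ≤ ‖v‖ * e := by
  set A := ContinuousLinearMap.adjoint S with hA
  have h1 : (inner 𝕜 (S v) (S u) : 𝕜) = inner 𝕜 v (A (S u)) := by
    rw [hA, ContinuousLinearMap.adjoint_inner_right]
  rw [h1, ← inner_sub_right]
  refine (norm_inner_le_norm _ _).trans (mul_le_mul_of_nonneg_left ?_ (norm_nonneg _))
  refine abs_le_of_sq_le_sq' ?_ he |>.2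
  refine le_trans ?_ h
  rw [norm_sub_sq (𝕜 := 𝕜)]
  have h2 : RCLike.re (inner 𝕜 u (A (S u)) : 𝕜) = ‖S u‖ ^ 2 := by
    rw [hA, ContinuousLinearMap.adjoint_inner_right, inner_self_eq_norm_sq]
  have h3 : ‖A (S u)‖ ≤ ‖S u‖ := by
    refine (A.le_opNorm _).trans ?_
    have : ‖A‖ ≤ 1 := by rw [hA, LinearIsometryEquiv.norm_map]; exact hS
    nlinarith [norm_nonneg (S u)]
  rw [h2]
  nlinarith [norm_nonneg (A (S u))]

lemma aux_sum (b : ℕ → ℝ) (hb : ∀ k, 0 ≤ b k) (w : ℕ → ℕ → ℝ) (e B : ℝ) (hB : 0 ≤ B)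
    (N n : ℕ) (d : ℝ) (hd : 0 ≤ d) (hbd : ∀ k ∈ Icc 1 n, b k ≤ d)
    (hw : ∀ k l, w k l ≤ e + B * ((if k < N then 1 else 0) + (if l < N then 1 else 0)
      + (if k < l + N ∧ l < k + N then 1 else 0))) :
    ∑ k ∈ Icc 1 n, ∑ l ∈ Icc 1 n, b k * b l * w k l ≤
      e * (∑ k ∈ Icc 1 n, b k) ^ 2 + B * (∑ k ∈ Icc 1 n, b k) * (4 * N * d) := by
  have key : ∀ (m : ℕ) (p : ℕ → Prop) [DecidablePred p] (s : Finset ℕ),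
      (∀ k, p k → k ∈ s) → s.card ≤ m →
      ∑ k ∈ Icc 1 n, b k * (if p k then (1 : ℝ) else 0) ≤ m * d := by
    intro m p _ s hs hm
    have : ∑ k ∈ Icc 1 n, b k * (if p k then (1 : ℝ) else 0)
        ≤ ∑ k ∈ (Icc 1 n).filter p, d := by
      rw [Finset.sum_filter]
      refine Finset.sum_le_sum fun k hk => ?_
      split_ifs
      · simpa using hbd k hk
      · simp
    refine this.trans ?_
    rw [Finset.sum_const, nsmul_eq_mul]
    refine mul_le_mul_of_nonneg_right ?_ hd
    have : ((Icc 1 n).filter p).card ≤ m :=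
      (Finset.card_le_card fun k hk => hs k (Finset.mem_filter.1 hk).2).trans hm
    exact_mod_cast this
  have k1 : ∑ k ∈ Icc 1 n, b k * (if k < N then (1 : ℝ) else 0) ≤ N * d :=
    key N _ (Finset.range N) (fun k hk => Finset.mem_range.2 hk) (by simp)
  have k2 : ∀ k, ∑ l ∈ Icc 1 n, b l * (if k < l + N ∧ l < k + N then (1 : ℝ) else 0)
      ≤ 2 * N * d := by
    intro k
    have := key (2 * N) (fun l => k < l + N ∧ l < k + N) (Finset.Ico (k + 1 - N) (k + N))
      (fun l hl => Finset.mem_Ico.2 (by omega)) (by rw [Nat.card_Ico]; omega)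
    push_cast at this
    exact this
  set S := ∑ k ∈ Icc 1 n, b k with hS
  have hS0 : 0 ≤ S := Finset.sum_nonneg fun k _ => hb k
  have step : ∀ k ∈ Icc 1 n, ∑ l ∈ Icc 1 n, b k * b l * w k l ≤
      b k * (e * S) + B * S * (b k * (if k < N then 1 else 0)) + b k * (B * (3 * N * d)) := by
    intro k hk
    calc ∑ l ∈ Icc 1 n, b k * b l * w k l
        ≤ ∑ l ∈ Icc 1 n, (b k * e * b l + B * (b k * (if k < N then 1 else 0)) * b l
          + b k * B * (b l * (if l < N then 1 else 0))
          + b k * B * (b l * (if k < l + N ∧ l < k + N then 1 else 0))) := by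
          refine Finset.sum_le_sum fun l hl => ?_
          refine (mul_le_mul_of_nonneg_left (hw k l) (mul_nonneg (hb k) (hb l))).trans
            (le_of_eq ?_)
          ring
      _ = b k * e * S + B * (b k * (if k < N then 1 else 0)) * S
          + b k * B * (∑ l ∈ Icc 1 n, b l * (if l < N then 1 else 0))
          + b k * B * (∑ l ∈ Icc 1 n, b l * (if k < l + N ∧ l < k + N then 1 else 0)) := by
          simp only [Finset.sum_add_distrib, ← Finset.mul_sum, hS]
      _ ≤ _ := by
          have hbB := mul_nonneg (hb k) hB
          have := mul_le_mul_of_nonneg_left k1 hbB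
          have := mul_le_mul_of_nonneg_left (k2 k) hbB
          linarith
  refine (Finset.sum_le_sum step).trans ?_
  simp only [Finset.sum_add_distrib, ← Finset.mul_sum, ← Finset.sum_mul]
  rw [← hS]
  have := mul_le_mul_of_nonneg_left k1 (mul_nonneg hB hS0)
  linarith

lemma aux_max (b : ℕ → ℝ) (hb : Tendsto (fun k : ℕ => b k / (k : ℝ)) atTop (nhds 0))
    (d : ℝ) (hd : 0 < d) : ∀ᶠ n : ℕ in atTop, ∀ k ∈ Icc 1 n, b k ≤ d * n := by
  obtain ⟨M, hM⟩ := eventually_atTop.1 (hb.eventually (ge_mem_nhds hd))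
  have h2 : ∀ᶠ n : ℕ in atTop, ∀ k ∈ Finset.range M, b k ≤ d * n := by
    rw [Filter.eventually_all_finset]
    intro k _
    exact (tendsto_natCast_atTop_atTop.const_mul_atTop hd).eventually_ge_atTop _
  filter_upwards [h2] with n hn k hk
  obtain ⟨hk1, hk2⟩ := Finset.mem_Icc.1 hk
  by_cases h : k < M
  · exact hn k (Finset.mem_range.2 h)
  · have := hM k (not_lt.1 h)
    have hk0 : (0 : ℝ) < k := by exact_mod_cast hk1
    rw [div_le_iff₀ hk0] at this
    refine this.trans (mul_le_mul_of_nonneg_left (by exact_mod_cast hk2) hd.le)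

lemma aux_inner {𝕜 : Type*} [RCLike 𝕜] {H : Type*} [NormedAddCommGroup H]
    [InnerProductSpace 𝕜 H] [CompleteSpace H]
    (T : H →L[𝕜] H) (hT : ‖T‖ ≤ 1) (x : H)
    (hx : ∀ y : H, Tendsto (fun n : ℕ => (inner 𝕜 ((T ^ n) x) y : 𝕜)) atTop (nhds 0))
    (e : ℝ) (he : 0 < e) :
    ∃ N : ℕ, ∀ k l, N ≤ k → k + N ≤ l → ‖(inner 𝕜 ((T ^ l) x) ((T ^ k) x) : 𝕜)‖ ≤ e := by
  have hpow : ∀ n, ‖T ^ n‖ ≤ 1 := by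
    intro n
    induction n with
    | zero => rw [pow_zero]; exact ContinuousLinearMap.norm_id_le (𝕜 := 𝕜) (E := H)
    | succ n ih =>
      rw [pow_succ]
      exact (norm_mul_le _ _).trans (mul_le_one₀ ih (norm_nonneg _) hT)
  have happ : ∀ n y, ‖(T ^ n) y‖ ≤ ‖y‖ := fun n y => by
    simpa using (T ^ n).le_of_opNorm_le (hpow n) y
  set f : ℕ → ℝ := fun n => ‖(T ^ n) x‖ ^ 2 with hf
  have hanti : Antitone f := by
    refine antitone_nat_of_succ_le fun n => ?_
    have : (T ^ (n + 1)) x = (T ^ 1) ((T ^ n) x) := by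
      rw [add_comm, pow_add]; rfl
    simp only [hf, this]
    gcongr
    exact happ 1 _
  have hlim := tendsto_atTop_ciInf hanti ⟨0, by rintro _ ⟨n, rfl⟩; positivity⟩
  set r := e / (2 * (‖x‖ + 1)) with hr
  have hx1 : 0 < ‖x‖ + 1 := by positivity
  have hr0 : 0 < r := by positivity
  obtain ⟨K, hK⟩ := (Metric.cauchySeq_iff'.1 hlim.cauchySeq) (r ^ 2) (by positivity)
  have hw := (hx ((T ^ K) x)).norm
  rw [norm_zero] at hw
  obtain ⟨J, hJ⟩ := eventually_atTop.1 (hw.eventually (ge_mem_nhds (half_pos he)))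
  refine ⟨K + J, fun k l hk hl => ?_⟩
  obtain ⟨m, rfl⟩ := Nat.exists_eq_add_of_le (show K ≤ k by omega)
  obtain ⟨j, rfl⟩ := Nat.exists_eq_add_of_le (show K + m ≤ l by omega)
  have e1 : (T ^ (K + m)) x = (T ^ m) ((T ^ K) x) := by
    rw [add_comm, pow_add]; rfl
  have e2 : (T ^ (K + m + j)) x = (T ^ m) ((T ^ (K + j)) x) := by
    rw [show K + m + j = m + (K + j) by ring, pow_add]; rfl
  have hc := aux_contr (T ^ m) (hpow m) ((T ^ K) x) ((T ^ (K + j)) x) r hr0.le (by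
    have := hK (K + m) (by omega)
    rw [Real.dist_eq, abs_lt] at this
    simp only [hf, e1] at this
    linarith)
  rw [e1, e2]
  have h1 := hJ (K + j) (by omega)
  have h2 : ‖(T ^ (K + j)) x‖ * r ≤ e / 2 := by
    have : ‖(T ^ (K + j)) x‖ * r ≤ (‖x‖ + 1) * r :=
      mul_le_mul_of_nonneg_right ((happ _ _).trans (by linarith)) hr0.le
    refine this.trans (le_of_eq ?_)
    rw [hr]; field_simp
  have h3 := norm_sub_norm_le (inner 𝕜 ((T ^ m) ((T ^ (K + j)) x)) ((T ^ m) ((T ^ K) x)) : 𝕜)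
    (inner 𝕜 ((T ^ (K + j)) x) ((T ^ K) x))
  rw [norm_sub_rev] at h3
  linarith

/-- Let `(a_k)` be scalars with `sup_n (1/n) ∑_{k=1}^n |a_k| < ∞` and
`|a_k| = o(k)`. Then for every contraction `T` on a (real or complex) Hilbert space `H` and
every `x ∈ H` with `T^n x → 0` weakly, `lim_n ‖(1/n) ∑_{k=1}^n a_k T^k x‖ = 0`. -/
theorem stmt5 {𝕜 : Type*} [RCLike 𝕜] {H : Type*} [NormedAddCommGroup H]
    [InnerProductSpace 𝕜 H] [CompleteSpace H]
    (a : ℕ → 𝕜)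
    (ha_bdd : ∃ C : ℝ, ∀ n : ℕ, (n : ℝ)⁻¹ * ∑ k ∈ Icc 1 n, ‖a k‖ ≤ C)
    (ha_o : Tendsto (fun k : ℕ => ‖a k‖ / (k : ℝ)) atTop (nhds 0))
    (T : H →L[𝕜] H) (hT : ‖T‖ ≤ 1) (x : H)
    (hx : ∀ y : H, Tendsto (fun n : ℕ => (inner 𝕜 ((T ^ n) x) y : 𝕜)) atTop (nhds 0)) :
    Tendsto (fun n : ℕ => ‖(n : 𝕜)⁻¹ • ∑ k ∈ Icc 1 n, a k • (T ^ k) x‖) atTop (nhds 0) := by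
  obtain ⟨C, hC⟩ := ha_bdd
  have hC0 : 0 ≤ C := by simpa using hC 0
  have happ : ∀ n y, ‖(T ^ n) y‖ ≤ ‖y‖ := by
    intro n
    induction n with
    | zero => simp
    | succ n ih =>
      intro y
      rw [pow_succ]
      refine (ih (T y)).trans ?_
      simpa using T.le_of_opNorm_le hT y
  have main : ∀ η : ℝ, 0 < η → ∀ᶠ n : ℕ in atTop,
      ‖(n : 𝕜)⁻¹ • ∑ k ∈ Icc 1 n, a k • (T ^ k) x‖ ^ 2 ≤ η := by
    intro η hη
    set e := η / (2 * (C ^ 2 + 1)) with he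
    have he0 : 0 < e := by positivity
    obtain ⟨N, hN⟩ := aux_inner T hT x hx e he0
    set B := ‖x‖ ^ 2 with hB
    have hB0 : 0 ≤ B := by positivity
    set d := η / (2 * (B * C * (4 * N) + 1)) with hd
    have hd0 : 0 < d := by positivity
    filter_upwards [aux_max _ ha_o d hd0, eventually_gt_atTop 0] with n hn hn0
    have hn' : (0 : ℝ) < n := by exact_mod_cast hn0
    set S := ∑ k ∈ Icc 1 n, ‖a k‖ with hS
    have hS0 : 0 ≤ S := Finset.sum_nonneg fun k _ => norm_nonneg _
    have hSC : S ≤ C * n := by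
      have := hC n
      rw [inv_mul_le_iff₀ hn'] at this
      linarith
    have h1 := aux_sum (fun k => ‖a k‖) (fun k => norm_nonneg _)
      (fun k l => ‖(inner 𝕜 ((T ^ k) x) ((T ^ l) x) : 𝕜)‖) e B hB0 N n (d * n)
      (by positivity) hn (by
        intro k l
        have hle : ‖(inner 𝕜 ((T ^ k) x) ((T ^ l) x) : 𝕜)‖ ≤ B := by
          refine (norm_inner_le_norm _ _).trans ?_
          rw [hB, sq]
          exact mul_le_mul (happ _ _) (happ _ _) (norm_nonneg _) (norm_nonneg _)
        by_cases c1 : k < N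
        · simp only [c1, if_true]
          split_ifs <;> nlinarith
        by_cases c2 : l < N
        · simp only [c2, if_true]
          split_ifs <;> nlinarith
        by_cases c3 : k < l + N ∧ l < k + N
        · rw [if_pos c3]
          split_ifs <;> nlinarith
        simp only [c1, c2, c3, if_false]
        have : ‖(inner 𝕜 ((T ^ k) x) ((T ^ l) x) : 𝕜)‖ ≤ e := by
          by_cases c4 : k < l + N
          · rw [norm_inner_symm]
            exact hN k l (by omega) (by omega)
          · exact hN l k (by omega) (by omega)
        linarith)
    have h2 : ‖∑ k ∈ Icc 1 n, a k • (T ^ k) x‖ ^ 2 ≤ ∑ k ∈ Icc 1 n, ∑ l ∈ Icc 1 n,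
        ‖a k‖ * ‖a l‖ * ‖(inner 𝕜 ((T ^ k) x) ((T ^ l) x) : 𝕜)‖ := by
      rw [← inner_self_eq_norm_sq (𝕜 := 𝕜)]
      refine (RCLike.re_le_norm _).trans ?_
      rw [sum_inner]
      refine (norm_sum_le _ _).trans (Finset.sum_le_sum fun k _ => ?_)
      rw [inner_sum]
      refine (norm_sum_le _ _).trans (Finset.sum_le_sum fun l _ => le_of_eq ?_)
      rw [inner_smul_left, inner_smul_right, norm_mul, norm_mul, RCLike.norm_conj]
      ring
    rw [norm_smul, mul_pow, norm_inv, RCLike.norm_natCast, inv_pow,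
      inv_mul_le_iff₀ (by positivity)]
    refine (h2.trans h1).trans ?_
    have h3 : e * S ^ 2 ≤ e * (C * n) ^ 2 := by gcongr
    have h4 : B * S * (4 * N * (d * n)) ≤ B * (C * n) * (4 * N * (d * n)) := by gcongr
    have h5 : e * C ^ 2 ≤ η / 2 := by
      have : e * (C ^ 2 + 1) = η / 2 := by rw [he]; field_simp
      linarith
    have h6 : B * C * (4 * N) * d ≤ η / 2 := by
      have : (B * C * (4 * N) + 1) * d = η / 2 := by
        have : B * C * (4 * N) + 1 ≠ 0 := by positivity
        rw [hd]; field_simp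
      linarith
    have h7 := mul_le_mul_of_nonneg_right (add_le_add h5 h6) (sq_nonneg (n : ℝ))
    calc _ ≤ e * (C * n) ^ 2 + B * (C * n) * (4 * N * (d * n)) := add_le_add h3 h4
      _ = (e * C ^ 2 + B * C * (4 * N) * d) * (n : ℝ) ^ 2 := by ring
      _ ≤ _ := h7
      _ = _ := by ring
  rw [Metric.tendsto_atTop']
  intro ε hε
  obtain ⟨M, hM⟩ := eventually_atTop.1 (main ((ε / 2) ^ 2) (by positivity))
  refine ⟨M, fun n hn => ?_⟩
  rw [dist_zero_right, norm_norm]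
  have := (abs_le_of_sq_le_sq' (hM n hn.le) (by positivity)).2
  linarith
end

section
/- Let (a_k)_{k≥1} be a sequence of scalars satisfying sup_n (1/n)∑_{k=1}^n |a_k| < ∞. Then |a_n| = o(n) if and only if (1/n²)∑_{k=1}^n |a_k|² → 0 as n → ∞. -/
open Filter Finset

/-- Let `(a_k)` be a sequence of scalars with
`sup_n (1/n) ∑_{k=1}^n |a_k| < ∞`. Then `|a_n| = o(n)` if and only if
`(1/n²) ∑_{k=1}^n |a_k|² → 0`. -/
theorem stmt7 {𝕜 : Type*} [RCLike 𝕜] (a : ℕ → 𝕜)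
    (ha_bdd : ∃ C : ℝ, ∀ n : ℕ, (n : ℝ)⁻¹ * ∑ k ∈ Icc 1 n, ‖a k‖ ≤ C) :
    Tendsto (fun n : ℕ => ‖a n‖ / (n : ℝ)) atTop (nhds 0) ↔
    Tendsto (fun n : ℕ => ((n : ℝ) ^ 2)⁻¹ * ∑ k ∈ Icc 1 n, ‖a k‖ ^ 2) atTop (nhds 0) := by
  obtain ⟨C, hC⟩ := ha_bdd
  have hC0 : 0 ≤ C := by simpa using hC 0
  constructor
  · intro h
    rw [Metric.tendsto_atTop] at h ⊢
    intro ε hε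
    set δ : ℝ := ε / (2 * (C + 1)) with hδ
    have hδ0 : 0 < δ := by positivity
    have hδε : δ * (2 * (C + 1)) = ε := by rw [hδ]; field_simp
    obtain ⟨N, hN⟩ := h δ hδ0
    set B : ℝ := ∑ k ∈ range N, ‖a k‖ with hB
    have hB0 : 0 ≤ B := Finset.sum_nonneg fun _ _ => norm_nonneg _
    obtain ⟨M, hM⟩ := exists_nat_ge (B / δ)
    refine ⟨M + 1, fun n hn => ?_⟩
    have hn0 : (0 : ℝ) < n := by exact_mod_cast (by omega : 0 < n)
    have hMn : (M : ℝ) ≤ n := by exact_mod_cast (by omega : M ≤ n)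
    have hBn : B ≤ δ * n := by
      have := (div_le_iff₀ hδ0).1 (hM.trans hMn)
      linarith
    have hk : ∀ k ∈ Icc 1 n, ‖a k‖ ≤ 2 * δ * n := by
      intro k hk
      rw [Finset.mem_Icc] at hk
      have hk0 : (0 : ℝ) < k := by exact_mod_cast (by omega : 0 < k)
      have hkn : (k : ℝ) ≤ n := by exact_mod_cast hk.2
      by_cases hkN : k < N
      · have : ‖a k‖ ≤ B := Finset.single_le_sum (f := fun k => ‖a k‖)
          (fun _ _ => norm_nonneg _) (Finset.mem_range.2 hkN)
        have : 0 < δ * n := by positivity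
        linarith
      · have h1 := hN k (by omega)
        rw [Real.dist_eq, sub_zero, abs_of_nonneg (by positivity), div_lt_iff₀ hk0] at h1
        have : δ * k ≤ δ * n := by gcongr
        have : 0 < δ * n := by positivity
        linarith
    have hS : ∑ k ∈ Icc 1 n, ‖a k‖ ≤ C * n := by
      have := hC n
      rwa [inv_mul_le_iff₀ hn0, mul_comm] at this
    have hQ : ∑ k ∈ Icc 1 n, ‖a k‖ ^ 2 ≤ 2 * δ * n * (C * n) := by
      calc ∑ k ∈ Icc 1 n, ‖a k‖ ^ 2 ≤ ∑ k ∈ Icc 1 n, 2 * δ * n * ‖a k‖ := by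
            refine Finset.sum_le_sum fun k hk' => ?_
            rw [sq]
            exact mul_le_mul_of_nonneg_right (hk k hk') (norm_nonneg _)
        _ = 2 * δ * n * ∑ k ∈ Icc 1 n, ‖a k‖ := by rw [Finset.mul_sum]
        _ ≤ _ := by gcongr
    rw [Real.dist_eq, sub_zero, abs_of_nonneg (by positivity), inv_mul_lt_iff₀ (by positivity)]
    refine hQ.trans_lt ?_
    rw [← hδε]
    have : 0 < δ * n ^ 2 := by positivity
    nlinarith
  · intro h
    have h2 : Tendsto (fun n : ℕ => (‖a n‖ / (n : ℝ)) ^ 2) atTop (nhds 0) := by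
      refine tendsto_of_tendsto_of_tendsto_of_le_of_le' tendsto_const_nhds h
        (Eventually.of_forall fun n => by positivity) ?_
      filter_upwards [eventually_ge_atTop 1] with n hn
      rw [div_pow, div_eq_inv_mul]
      refine mul_le_mul_of_nonneg_left ?_ (by positivity)
      exact Finset.single_le_sum (f := fun k => ‖a k‖ ^ 2)
        (fun _ _ => by positivity) (Finset.mem_Icc.2 ⟨hn, le_rfl⟩)
    have h3 := h2.sqrt
    rw [Real.sqrt_zero] at h3
    refine h3.congr fun n => ?_
    exact Real.sqrt_sq (by positivity)
end
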